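/- Let X be a Banach space of analytic functions on 𝔻 in which the analytic polynomials are dense, with limsup_{n→∞} ‖z^n‖_X^{1/n} ≤ 1, and which is continuously embedded in H². If the Cauchy dual X' is continuously embedded in H^p for some p > 0, then the pair (X, ϑ) satisfies the (P)-property for every inner function ϑ. -/

import Mathlib

open MeasureTheory Complex Filter Set Metric Polynomial

noncomputable section

/-- Normalized arc-length measure on the unit circle 𝕋, realized on the
parameter interval `(0, 2π]` via `θ ↦ e^{iθ}`. -/
def arcM : Measure ℝ :=
  (ENNReal.ofReal (2 * Real.pi))⁻¹ • (volume.restrict (Set.Ioc 0 (2 * Real.pi)))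

/-- The open unit disc 𝔻 ⊆ ℂ. -/
def uDisc : Set ℂ := Metric.ball 0 1

/-- The unit circle 𝕋 ⊆ ℂ. -/
def uCircle : Set ℂ := Metric.sphere 0 1

/-- The boundary point `e^{iθ}`. -/
def bpt (θ : ℝ) : ℂ := Complex.exp (θ * Complex.I)

/-- `f` is analytic on the open unit disc. -/
def AnalyticOnDisc (f : ℂ → ℂ) : Prop := DifferentiableOn ℂ f uDisc

/-- The integral mean `∫_𝕋 |f(rζ)|^p dm(ζ)`. -/
def hMean (p : ℝ) (f : ℂ → ℂ) (r : ℝ) : ℝ := ∫ θ, ‖f ((r : ℂ) * bpt θ)‖ ^ p ∂arcM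

/-- Membership in the Hardy space `H^p`, `0 < p < ∞`. -/
def MemHp (p : ℝ) (f : ℂ → ℂ) : Prop :=
  AnalyticOnDisc f ∧ BddAbove (hMean p f '' Set.Ioo 0 1)

/-- The Hardy space (quasi-)norm `‖f‖_{H^p} = (sup_{0<r<1} ∫_𝕋 |f(rζ)|^p dm)^{min(1,1/p)}`. -/
def hardyNorm (p : ℝ) (f : ℂ → ℂ) : ℝ :=
  sSup (hMean p f '' Set.Ioo 0 1) ^ min 1 (1 / p)

/-- Membership in `H^∞`: bounded analytic functions on 𝔻. -/
def MemHinf (f : ℂ → ℂ) : Prop :=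
  AnalyticOnDisc f ∧ ∃ C : ℝ, ∀ z ∈ uDisc, ‖f z‖ ≤ C

/-- `F` is (a representative of) the boundary function of `f` : radial limits a.e. on 𝕋. -/
def BoundaryFn (f : ℂ → ℂ) (F : ℝ → ℂ) : Prop :=
  ∀ᵐ θ ∂arcM, Filter.Tendsto (fun r : ℝ => f ((r : ℂ) * bpt θ))
    (nhdsWithin 1 (Set.Iio 1)) (nhds (F θ))

/-- `ϑ` is an inner function: bounded analytic with unimodular boundary values a.e. -/
def IsInner (ϑ : ℂ → ℂ) : Prop :=
  MemHinf ϑ ∧ ∃ Θ : ℝ → ℂ, BoundaryFn ϑ Θ ∧ ∀ᵐ θ ∂arcM, ‖Θ θ‖ = 1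

/-- The boundary function of `f` lies in `ϑ ⋅ conj(H^p_0)`. -/
def PseudoCont (p : ℝ) (ϑ f : ℂ → ℂ) : Prop :=
  ∃ F Θ G : ℝ → ℂ, ∃ g : ℂ → ℂ,
    BoundaryFn f F ∧ BoundaryFn ϑ Θ ∧ MemHp p g ∧ g 0 = 0 ∧ BoundaryFn g G ∧
    ∀ᵐ θ ∂arcM, F θ = Θ θ * (starRingEnd ℂ) (G θ)

/-- The boundary function of `f` lies in `ϑ ⋅ conj(H^∞_0)`. -/
def PseudoContInf (ϑ f : ℂ → ℂ) : Prop :=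
  ∃ F Θ G : ℝ → ℂ, ∃ g : ℂ → ℂ,
    BoundaryFn f F ∧ BoundaryFn ϑ Θ ∧ MemHinf g ∧ g 0 = 0 ∧ BoundaryFn g G ∧
    ∀ᵐ θ ∂arcM, F θ = Θ θ * (starRingEnd ℂ) (G θ)

/-- `f` extends analytically across the boundary set `S ⊆ 𝕋`. -/
def ExtendsAcross (f : ℂ → ℂ) (S : Set ℂ) : Prop :=
  ∃ U : Set ℂ, ∃ g : ℂ → ℂ, IsOpen U ∧ S ⊆ U ∧
    DifferentiableOn ℂ g (uDisc ∪ U) ∧ Set.EqOn g f uDisc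

/-- The boundary spectrum `σ(ϑ)`: the points of 𝕋 across which `ϑ` admits no
analytic continuation. -/
def bSpectrum (ϑ : ℂ → ℂ) : Set ℂ := {ζ | ζ ∈ uCircle ∧ ¬ ExtendsAcross ϑ {ζ}}

/-- Membership in the space `K^p_ϑ` of pseudocontinuable functions, `0 < p < ∞`:
`f ∈ H^p`, the boundary function of `f` lies in `ϑ ⋅ conj(H^p_0)`, and `f`
continues analytically across `𝕋 ∖ σ(ϑ)`. -/
def MemKp (p : ℝ) (ϑ f : ℂ → ℂ) : Prop :=
  MemHp p f ∧ PseudoCont p ϑ f ∧ ExtendsAcross f (uCircle \ bSpectrum ϑ)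

/-- Membership in `K^∞_ϑ = H^∞ ∩ ϑ ⋅ conj(H^∞_0)`. -/
def MemKinf (ϑ f : ℂ → ℂ) : Prop := MemHinf f ∧ PseudoContInf ϑ f

/-- The backward shift `f ↦ (f - f(0))/z`. -/
def bShift (f : ℂ → ℂ) : ℂ → ℂ :=
  fun z => if z = 0 then deriv f 0 else (f z - f 0) / z

/-- `X ∩ K^p_ϑ` is dense in `K^p_ϑ` in the `H^p` metric. -/
def DenseInKp (p : ℝ) (ϑ : ℂ → ℂ) (X : Set (ℂ → ℂ)) : Prop :=
  ∀ f : ℂ → ℂ, MemKp p ϑ f → ∀ ε > (0 : ℝ), ∃ g ∈ X, MemKp p ϑ g ∧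
    hardyNorm p (fun z => f z - g z) < ε

/-- `X ∩ K^∞_ϑ` is dense in `K^∞_ϑ` in the weak-star topology inherited from
`L^∞(𝕋, m) = (L¹(𝕋, m))^*`. -/
def WStarDenseKinf (ϑ : ℂ → ℂ) (X : Set (ℂ → ℂ)) : Prop :=
  ∀ f : ℂ → ℂ, MemKinf ϑ f → ∀ F : ℝ → ℂ, BoundaryFn f F →
    ∀ (n : ℕ) (h : Fin n → ℝ → ℂ), (∀ i, Integrable (h i) arcM) → ∀ ε > (0 : ℝ),
      ∃ g ∈ X, MemKinf ϑ g ∧ ∃ G : ℝ → ℂ, BoundaryFn g G ∧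
        ∀ i, ‖∫ θ, (F θ - G θ) * h i θ ∂arcM‖ < ε

/-- The Cauchy dual function `𝓛(Λ)(z) = ∑_n conj(Λ(ζ ↦ ζ^n)) zⁿ` associated to a bounded
functional `Λ` on `X`; here `e n ∈ X` represents the monomial `z ↦ zⁿ`. -/
def cauchyDualFn {X : Type*} [NormedAddCommGroup X] [NormedSpace ℂ X]
    (e : ℕ → X) (Λ : X →L[ℂ] ℂ) : ℂ → ℂ :=
  fun z => ∑' n : ℕ, (starRingEnd ℂ) (Λ (e n)) * z ^ n

/-- The weak-star closure of a set of bounded functionals on `X`: `Λ` belongs to the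
closure iff every basic weak-star neighborhood of `Λ` meets the set. -/
def wstarClosure {X : Type*} [NormedAddCommGroup X] [NormedSpace ℂ X]
    (S : Set (X →L[ℂ] ℂ)) : Set (X →L[ℂ] ℂ) :=
  {Λ | ∀ F : Finset X, ∀ ε > (0 : ℝ), ∃ Λ' ∈ S, ∀ x ∈ F, ‖Λ x - Λ' x‖ < ε}

/-- The set of functionals on `X` whose Cauchy dual function is an analytic polynomial
multiple of `ϑ`. -/
def polyMultiples {X : Type*} [NormedAddCommGroup X] [NormedSpace ℂ X]
    (e : ℕ → X) (ϑ : ℂ → ℂ) : Set (X →L[ℂ] ℂ) :=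
  {Λ | ∃ q : Polynomial ℂ, cauchyDualFn e Λ = fun z => ϑ z * q.eval z}

/-- The `(P)`-property of the pair `(X, ϑ)`: `[ϑ]_{X'} ∩ H² ⊆ ϑ H²`, i.e. every element of
the weak-star closure in the Cauchy dual `X'` of the polynomial multiples of `ϑ` which lies
in `H²` is divisible by `ϑ` in `H²`. -/
def PProperty {X : Type*} [NormedAddCommGroup X] [NormedSpace ℂ X]
    (e : ℕ → X) (ϑ : ℂ → ℂ) : Prop :=
  ∀ Λ ∈ wstarClosure (polyMultiples e ϑ), MemHp 2 (cauchyDualFn e Λ) →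
    ∃ h : ℂ → ℂ, MemHp 2 h ∧ ∀ z ∈ uDisc, cauchyDualFn e Λ z = ϑ z * h z

/-- Membership in the model space `K²_ϑ = H² ∩ ϑ ⋅ conj(H²_0)`. -/
def MemK2 (ϑ f : ℂ → ℂ) : Prop := MemHp 2 f ∧ PseudoCont 2 ϑ f

/-!
Division by `ϑ` is contractive on `ϑH^p ∩ H^q`: a power `|h|^s` with `s < min p q` is dominated by
its Poisson integral, and `|ϑ|` tends to `1` almost everywhere on the boundary, so `∫ |h|^q` over a
circle is controlled by `∫ |ϑh|^q` over larger circles. Hence, when `X'` embeds in `H^p`, the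
elements of a ball of `X'` that lie in `ϑH^p` have quotients by `ϑ` forming a bounded set of `H^p`,
which is a normal family. Since point evaluations are weak-star continuous on `X'`, the subspace
`X' ∩ ϑH^p` meets every ball in a weak-star closed set, so by the Krein–Šmulian theorem it is
weak-star closed and contains `[ϑ]_{X'}`. An element of `[ϑ]_{X'} ∩ H²` is then `ϑh` with `h ∈ H^p`,
and contractivity with `q = 2` gives `h ∈ H²`.
-/

open scoped Pointwise ComplexConjugate ENNReal Topology

set_option maxSynthPendingDepth 3

section KreinSmulian

theorem exists_strongDual_norm_le_one_and_one_lt_norm {𝕜 E : Type*} [RCLike 𝕜] [AddCommGroup E]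
    [Module 𝕜 E] [Module ℝ E] [IsScalarTower ℝ 𝕜 E] [TopologicalSpace E] [IsTopologicalAddGroup E]
    [ContinuousSMul 𝕜 E] [LocallyConvexSpace ℝ E] {s : Set E} (hne : s.Nonempty)
    (hconv : Convex ℝ s) (hbal : Balanced 𝕜 s) (hclosed : IsClosed s) {x : E} (hx : x ∉ s) :
    ∃ f : StrongDual 𝕜 E, (∀ y ∈ s, ‖f y‖ ≤ 1) ∧ 1 < ‖f x‖ := by
  obtain ⟨f, u, hlt, hu⟩ :=
    RCLike.geometric_hahn_banach_closed_point (𝕜 := 𝕜) hconv hclosed hx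
  have hu_pos : 0 < u := by simpa using hlt 0 (hbal.zero_mem hne)
  have hle : ∀ y ∈ s, ‖f y‖ ≤ u := by
    intro y hy
    obtain ⟨c, hc, hcy⟩ := RCLike.exists_norm_eq_mul_self (f y)
    have := hlt (c • y) (hbal.smul_mem hc.le hy)
    rw [map_smul, smul_eq_mul, ← hcy, RCLike.ofReal_re] at this
    exact this.le
  have hnorm : ∀ y, ‖((u⁻¹ : ℝ) : 𝕜) • f y‖ = ‖f y‖ / u := fun y => by
    rw [norm_smul, RCLike.norm_ofReal, abs_of_pos (inv_pos.2 hu_pos), inv_mul_eq_div]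
  refine ⟨((u⁻¹ : ℝ) : 𝕜) • f, fun y hy => ?_, ?_⟩
  · exact (hnorm y).trans_le ((div_le_one hu_pos).2 (hle y hy))
  · exact ((one_lt_div hu_pos).2 (hu.trans_le (RCLike.re_le_norm _))).trans_eq (hnorm x).symm

variable {𝕜 X : Type*} [RCLike 𝕜] [NormedAddCommGroup X] [NormedSpace 𝕜 X]

instance weakDual_isScalarTower_real : IsScalarTower ℝ 𝕜 (WeakDual 𝕜 X) :=
  inferInstanceAs (IsScalarTower ℝ 𝕜 (StrongDual 𝕜 X))

instance weakDual_locallyConvexSpace_real : LocallyConvexSpace ℝ (WeakDual 𝕜 X) :=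
  (WeakDual.withSeminorms 𝕜 X).toLocallyConvexSpace

theorem exists_apply_norm_le_one_and_one_lt_norm {K : Set (StrongDual 𝕜 X)} (hne : K.Nonempty)
    (hconv : Convex ℝ K) (hbal : Balanced 𝕜 K) (hclosed : IsClosed (WeakDual.toStrongDual ⁻¹' K))
    {Λ : StrongDual 𝕜 X} (hΛ : Λ ∉ K) : ∃ x : X, (∀ m ∈ K, ‖m x‖ ≤ 1) ∧ 1 < ‖Λ x‖ := by
  obtain ⟨f, hfK, hfΛ⟩ : ∃ f : StrongDual 𝕜 (WeakDual 𝕜 X),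
      (∀ m ∈ WeakDual.toStrongDual ⁻¹' K, ‖f m‖ ≤ 1) ∧ 1 < ‖f (StrongDual.toWeakDual Λ)‖ := by
    refine exists_strongDual_norm_le_one_and_one_lt_norm ?_ ?_ ?_ hclosed ?_
    exacts [hne, hconv, hbal, hΛ]
  obtain ⟨x, rfl⟩ := LinearMap.dualEmbedding_surjective (topDualPairing 𝕜 X) f
  exact ⟨x, hfK, hfΛ⟩

theorem exists_strongDual_of_notMem_closure_closedBall_add (p : Seminorm 𝕜 X) {x : X} {δ η : ℝ}
    (hδ : 0 < δ) (hη : 0 ≤ η) (hx : x ∉ closure (closedBall 0 δ + p.closedBall 0 η)) :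
    ∃ Λ : StrongDual 𝕜 X, ‖Λ‖ ≤ 1 / δ ∧ (∀ y, p y ≤ η → ‖Λ y‖ ≤ 1) ∧ 1 < ‖Λ x‖ := by
  let _ : NormedSpace ℝ X := NormedSpace.restrictScalars ℝ 𝕜 X
  have _ : IsScalarTower ℝ 𝕜 X := RestrictScalars.isScalarTower ℝ 𝕜 X
  have hB0 : (0 : X) ∈ closedBall 0 δ := mem_closedBall_self hδ.le
  have hp0 : (0 : X) ∈ p.closedBall 0 η := p.mem_closedBall_self hη
  have hBp : closedBall 0 δ ⊆ closure (closedBall 0 δ + p.closedBall 0 η) := fun y hy =>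
    subset_closure ⟨y, hy, 0, hp0, add_zero y⟩
  obtain ⟨Λ, hΛ, hΛx⟩ := exists_strongDual_norm_le_one_and_one_lt_norm (𝕜 := 𝕜) ⟨0, hBp hB0⟩
    ((convex_closedBall 0 _).add (p.convex_closedBall 0 η)).closure
    (balanced_closedBall_zero.add (p.balanced_closedBall_zero η)).closure isClosed_closure hx
  refine ⟨Λ, ?_, fun y hy => ?_, hΛx⟩
  · exact ContinuousLinearMap.opNorm_bound_of_ball_bound hδ 1 Λ fun y hy => hΛ y (hBp hy)
  · exact hΛ y (subset_closure ⟨0, hB0, y, (p.mem_closedBall_zero).2 hy, zero_add y⟩)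

/-- Weak-star closedness of the intersections of `M` with all balls, the hypothesis of the
Krein–Šmulian theorem; the weak-star topology is that of `WeakDual 𝕜 X`. -/
def IsBoundedlyWeakStarClosed (M : Submodule 𝕜 (StrongDual 𝕜 X)) : Prop :=
  ∀ R : ℝ, IsClosed (WeakDual.toStrongDual ⁻¹' ((M : Set (StrongDual 𝕜 X)) ∩ closedBall 0 R))

/-- Evaluation of the functionals in `M` at the points of `X`, a map from `X` to the dual of `M`. -/
def evalOn (M : Submodule 𝕜 (StrongDual 𝕜 X)) : X →L[𝕜] M →L[𝕜] 𝕜 :=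
  M.subtypeL.flip

namespace IsBoundedlyWeakStarClosed

variable {M : Submodule 𝕜 (StrongDual 𝕜 X)}

theorem mem_of_forall_norm_apply_le_one (hM : IsBoundedlyWeakStarClosed M) {Λ : StrongDual 𝕜 X}
    {η : ℝ} (hη : 0 < η) (hΛ : ∀ x, ‖evalOn M x‖ ≤ η → ‖Λ x‖ ≤ 1) : Λ ∈ M := by
  have hbal : Balanced 𝕜 ((M : Set (StrongDual 𝕜 X)) ∩ closedBall 0 η⁻¹) :=
    balanced_iff_smul_mem.2 fun _ hc _ hm =>
      ⟨M.smul_mem _ hm.1, balanced_closedBall_zero.smul_mem hc hm.2⟩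
  have hconv : Convex ℝ ((M : Set (StrongDual 𝕜 X)) ∩ closedBall 0 η⁻¹) :=
    (M.restrictScalars ℝ).convex.inter (convex_closedBall 0 _)
  have hne : ((M : Set (StrongDual 𝕜 X)) ∩ closedBall 0 η⁻¹).Nonempty :=
    ⟨0, M.zero_mem, mem_closedBall_self (by positivity)⟩
  by_contra hΛM
  obtain ⟨x, hxM, hxΛ⟩ := exists_apply_norm_le_one_and_one_lt_norm hne hconv hbal (hM _)
    fun h => hΛM h.1
  have hx : ‖evalOn M x‖ ≤ 1 / η⁻¹ :=
    ContinuousLinearMap.opNorm_bound_of_ball_bound (inv_pos.2 hη) 1 _ fun m hm =>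
      hxM m ⟨m.2, by simpa using hm⟩
  exact hxΛ.not_ge (hΛ x (by simpa using hx))

theorem mem_closure_closedBall_add (hM : IsBoundedlyWeakStarClosed M) {x : X} {η : ℝ}
    (hx : evalOn M x ≠ 0) (hη : 0 < η) : x ∈ closure (closedBall 0 ‖evalOn M x‖ +
      ((normSeminorm 𝕜 _).comp (evalOn M).toLinearMap).closedBall 0 η) := by
  have hδ : 0 < ‖evalOn M x‖ := norm_pos_iff.2 hx
  by_contra hxs
  obtain ⟨Λ, hΛnorm, hΛ, hΛx⟩ :=
    exists_strongDual_of_notMem_closure_closedBall_add _ hδ hη.le hxs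
  have hΛM : Λ ∈ M := hM.mem_of_forall_norm_apply_le_one hη hΛ
  refine hΛx.not_ge ?_
  calc ‖Λ x‖ = ‖evalOn M x ⟨Λ, hΛM⟩‖ := rfl
    _ ≤ ‖evalOn M x‖ * ‖Λ‖ := (evalOn M x).le_opNorm _
    _ ≤ ‖evalOn M x‖ * (1 / ‖evalOn M x‖) := by gcongr
    _ = 1 := by field_simp

theorem exists_norm_le_and_norm_evalOn_sub_le (hM : IsBoundedlyWeakStarClosed M) (x : X) :
    ∃ y, ‖y‖ ≤ ‖evalOn M x‖ ∧ ‖evalOn M (x - y)‖ ≤ ‖evalOn M x‖ / 2 := by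
  rcases eq_or_ne (evalOn M x) 0 with hx | hx
  · exact ⟨0, by simp, by simp [hx]⟩
  have hδ : 0 < ‖evalOn M x‖ := norm_pos_iff.2 hx
  have hJ : 0 < ‖evalOn M‖ :=
    pos_of_mul_pos_left (hδ.trans_le ((evalOn M).le_opNorm x)) (norm_nonneg x)
  obtain ⟨_, ⟨b, hb, y, hy, rfl⟩, hdist⟩ := Metric.mem_closure_iff.1
    (hM.mem_closure_closedBall_add hx (η := ‖evalOn M x‖ / 4) (by positivity))
    (‖evalOn M x‖ / 4 / ‖evalOn M‖) (by positivity)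
  refine ⟨b, mem_closedBall_zero_iff.1 hb, ?_⟩
  have hy' : ‖evalOn M y‖ ≤ ‖evalOn M x‖ / 4 := (Seminorm.mem_closedBall_zero _).1 hy
  calc ‖evalOn M (x - b)‖ = ‖evalOn M (x - (b + y)) + evalOn M y‖ := by
        rw [← map_add]; congr 2; abel
    _ ≤ ‖evalOn M‖ * dist x (b + y) + ‖evalOn M x‖ / 4 := by
        rw [dist_eq_norm]
        exact norm_add_le_of_le ((evalOn M).le_opNorm _) hy'
    _ ≤ ‖evalOn M‖ * (‖evalOn M x‖ / 4 / ‖evalOn M‖) + ‖evalOn M x‖ / 4 := by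
        gcongr
    _ = ‖evalOn M x‖ / 2 := by field_simp; ring

end IsBoundedlyWeakStarClosed

theorem exists_norm_le_two_mul_and_map_eq {E F : Type*} [NormedAddCommGroup E] [NormedSpace 𝕜 E]
    [CompleteSpace E] [NormedAddCommGroup F] [NormedSpace 𝕜 F] (f : E →L[𝕜] F)
    (hf : ∀ x, ∃ y, ‖y‖ ≤ ‖f x‖ ∧ ‖f (x - y)‖ ≤ ‖f x‖ / 2) (x : E) :
    ∃ y, ‖y‖ ≤ 2 * ‖f x‖ ∧ f y = f x := by
  choose g hg hfg using hf
  let r : ℕ → E := fun n => (fun x => x - g x)^[n] x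
  have hr_succ : ∀ n, r (n + 1) = r n - g (r n) := fun n => Function.iterate_succ_apply' _ n x
  have hfr : ∀ n, ‖f (r n)‖ ≤ ‖f x‖ * (1 / 2) ^ n := by
    intro n
    induction n with
    | zero => simp [r]
    | succ n ih =>
      rw [hr_succ, pow_succ]
      linarith [hfg (r n)]
  have hgeom : HasSum (fun n : ℕ => ‖f x‖ * (1 / 2) ^ n) (‖f x‖ * 2) :=
    hasSum_geometric_two.mul_left _
  have hsum : Summable fun n => g (r n) :=
    hgeom.summable.of_norm_bounded fun n => (hg _).trans (hfr n)
  have hpartial : ∀ n, f (∑ k ∈ Finset.range n, g (r k)) = f x - f (r n) := by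
    intro n
    induction n with
    | zero => simp [r]
    | succ n ih => rw [Finset.sum_range_succ, map_add, ih, hr_succ, map_sub]; abel
  refine ⟨∑' n, g (r n), ?_, ?_⟩
  · rw [mul_comm]
    exact tsum_of_norm_bounded hgeom fun n => (hg _).trans (hfr n)
  · have hfr_lim : Tendsto (fun n => f (r n)) atTop (𝓝 0) :=
      squeeze_zero_norm hfr hgeom.summable.tendsto_atTop_zero
    have hlim : Tendsto (fun n => f x - f (r n)) atTop (𝓝 (f (∑' n, g (r n)))) := by
      simpa only [Function.comp_def, hpartial] using
        (f.continuous.tendsto _).comp hsum.hasSum.tendsto_sum_nat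
    exact tendsto_nhds_unique hlim (by simpa using hfr_lim.const_sub (f x))

theorem IsBoundedlyWeakStarClosed.exists_forall_apply_eq_zero_and_apply_ne_zero [CompleteSpace X]
    {M : Submodule 𝕜 (StrongDual 𝕜 X)} (hM : IsBoundedlyWeakStarClosed M) {Λ : StrongDual 𝕜 X}
    (hΛ : Λ ∉ M) : ∃ x, (∀ m ∈ M, m x = 0) ∧ Λ x ≠ 0 := by
  have hη : 0 < (2 * (‖Λ‖ + 1))⁻¹ := by positivity
  obtain ⟨x, hx, hxΛ⟩ : ∃ x, ‖evalOn M x‖ ≤ (2 * (‖Λ‖ + 1))⁻¹ ∧ 1 < ‖Λ x‖ := by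
    by_contra! h
    exact hΛ (hM.mem_of_forall_norm_apply_le_one hη h)
  obtain ⟨y, hy, hyx⟩ := exists_norm_le_two_mul_and_map_eq (evalOn M)
    hM.exists_norm_le_and_norm_evalOn_sub_le x
  refine ⟨x - y, fun m hm => ?_, fun h => ?_⟩
  · exact DFunLike.congr_fun (show evalOn M (x - y) = 0 by rw [map_sub, hyx, sub_self]) ⟨m, hm⟩
  · rw [map_sub, sub_eq_zero] at h
    refine (h ▸ hxΛ).not_ge ?_
    calc ‖Λ y‖ ≤ ‖Λ‖ * (2 * (2 * (‖Λ‖ + 1))⁻¹) :=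
          (Λ.le_opNorm y).trans (by gcongr; exact hy.trans (by gcongr))
      _ = ‖Λ‖ / (‖Λ‖ + 1) := by field_simp
      _ ≤ 1 := div_le_one_of_le₀ (by linarith) (by positivity)

end KreinSmulian

section ArcMeasure

instance isProbabilityMeasure_arcM : IsProbabilityMeasure arcM := by
  refine ⟨?_⟩
  rw [arcM, Measure.smul_apply, Measure.restrict_apply_univ, Real.volume_Ioc, sub_zero]
  exact ENNReal.inv_mul_cancel (by simp [Real.pi_pos]) ENNReal.ofReal_ne_top

theorem bpt_eq_circleMap (θ : ℝ) : bpt θ = circleMap 0 1 θ := by simp [bpt, circleMap]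

@[simp] theorem norm_bpt (θ : ℝ) : ‖bpt θ‖ = 1 := by simp [bpt_eq_circleMap]

@[fun_prop] theorem continuous_bpt : Continuous bpt := by unfold bpt; fun_prop

theorem norm_ofReal_mul_bpt {r : ℝ} (hr : 0 ≤ r) (θ : ℝ) : ‖(r : ℂ) * bpt θ‖ = r := by
  simp [abs_of_nonneg hr]

theorem norm_ofReal_mul_bpt_lt_one {r : ℝ} (hr : r ∈ Ico (0 : ℝ) 1) (θ : ℝ) :
    ‖(r : ℂ) * bpt θ‖ < 1 :=
  (norm_ofReal_mul_bpt hr.1 θ).trans_lt hr.2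

theorem mem_uDisc {z : ℂ} : z ∈ uDisc ↔ ‖z‖ < 1 := mem_ball_zero_iff

theorem integral_arcM_comp_bpt {E : Type*} [NormedAddCommGroup E] [NormedSpace ℝ E] (g : ℂ → E) :
    ∫ θ, g (bpt θ) ∂arcM = Real.circleAverage g 0 1 := by
  rw [arcM, integral_smul_measure, ← intervalIntegral.integral_of_le Real.two_pi_pos.le,
    Real.circleAverage_def, ENNReal.toReal_inv, ENNReal.toReal_ofReal Real.two_pi_pos.le]
  simp only [bpt_eq_circleMap]

theorem integrable_arcM_of_continuous {E : Type*} [NormedAddCommGroup E] {g : ℝ → E}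
    (hg : Continuous g) : Integrable g arcM :=
  (hg.integrableOn_Ioc).smul_measure (by simp [Real.pi_pos])

theorem hMean_nonneg (p : ℝ) (f : ℂ → ℂ) (r : ℝ) : 0 ≤ hMean p f r :=
  integral_nonneg fun _ => by positivity

theorem hMean_congr {p r : ℝ} {f g : ℂ → ℂ} (hfg : EqOn f g uDisc) (hr : r ∈ Ico (0 : ℝ) 1) :
    hMean p f r = hMean p g r := by
  simp only [hMean, hfg (mem_uDisc.2 (norm_ofReal_mul_bpt_lt_one hr _))]

end ArcMeasure

section HarmonicMeasure

/-- The harmonic measure `P_z dm` of the disc at the point `z`, where `P_z` is the Poisson kernel;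
like `arcM`, it lives on the parameter interval `(0, 2π]`. -/
def harmonicMeasure (z : ℂ) : Measure ℝ :=
  arcM.withDensity fun θ => ENNReal.ofReal (poissonKernel 0 z (bpt θ))

variable {z : ℂ}

theorem poissonKernel_bpt (z : ℂ) (θ : ℝ) :
    poissonKernel 0 z (bpt θ) = (1 - ‖z‖ ^ 2) / ‖bpt θ - z‖ ^ 2 := by
  simp [poissonKernel_def]

theorem poissonKernel_bpt_nonneg (hz : ‖z‖ < 1) (θ : ℝ) : 0 ≤ poissonKernel 0 z (bpt θ) := by
  rw [poissonKernel_bpt]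
  exact div_nonneg (sub_nonneg.2 (pow_le_one₀ (norm_nonneg z) hz.le)) (by positivity)

theorem poissonKernel_bpt_le (hz : ‖z‖ < 1) (θ : ℝ) :
    poissonKernel 0 z (bpt θ) ≤ (1 + ‖z‖) / (1 - ‖z‖) := by
  rw [poissonKernel_eq_re_herglotzRieszKernel]
  simpa [herglotzRieszKernel_def] using
    re_herglotzRieszKernel_le (c := 0) (z := bpt θ) (by simp) (mem_ball_zero_iff.2 hz)

theorem continuousOn_poissonKernel_bpt :
    ContinuousOn (fun x : ℂ × ℝ => poissonKernel 0 x.1 (bpt x.2)) {x | ‖x.1‖ < 1} := by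
  simp only [poissonKernel_bpt]
  refine ContinuousOn.div (by fun_prop) (by fun_prop) fun x hx => ?_
  have hne : bpt x.2 ≠ x.1 := fun h => hx.ne (h ▸ norm_bpt x.2)
  exact pow_ne_zero 2 (norm_ne_zero_iff.2 (sub_ne_zero.2 hne))

theorem continuous_poissonKernel_bpt (hz : ‖z‖ < 1) :
    Continuous fun θ => poissonKernel 0 z (bpt θ) :=
  continuousOn_poissonKernel_bpt.comp_continuous (f := fun θ => (z, θ)) (by fun_prop) fun _ => hz

theorem poissonKernel_ofReal_mul_bpt_comm (ρ t θ : ℝ) :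
    poissonKernel 0 (ρ * bpt t) (bpt θ) = poissonKernel 0 (ρ * bpt θ) (bpt t) := by
  have hconj : ∀ a, conj (bpt a) * bpt a = 1 := fun a => by
    rw [Complex.conj_mul', norm_bpt]; simp
  have hflip : conj (bpt θ - ρ * bpt t) * (bpt θ * bpt t) = bpt t - ρ * bpt θ := by
    rw [map_sub, map_mul, conj_ofReal]
    linear_combination bpt t * hconj θ - ρ * bpt θ * hconj t
  have hnorm : ‖bpt θ - ρ * bpt t‖ = ‖bpt t - ρ * bpt θ‖ := by
    rw [← hflip, norm_mul, norm_mul, RCLike.norm_conj, norm_bpt, norm_bpt, one_mul, mul_one]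
  simp [poissonKernel_bpt, hnorm]

theorem integral_harmonicMeasure {E : Type*} [NormedAddCommGroup E] [NormedSpace ℝ E]
    (hz : ‖z‖ < 1) (g : ℝ → E) :
    ∫ θ, g θ ∂harmonicMeasure z = ∫ θ, poissonKernel 0 z (bpt θ) • g θ ∂arcM := by
  rw [harmonicMeasure, integral_withDensity_eq_integral_toReal_smul
    (continuous_poissonKernel_bpt hz).measurable.ennreal_ofReal (by simp)]
  simp only [ENNReal.toReal_ofReal (poissonKernel_bpt_nonneg hz _)]

theorem harmonicMeasure_le (hz : ‖z‖ < 1) :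
    harmonicMeasure z ≤ ENNReal.ofReal ((1 + ‖z‖) / (1 - ‖z‖)) • arcM := by
  rw [← withDensity_const]
  exact withDensity_mono (.of_forall fun θ => ENNReal.ofReal_le_ofReal (poissonKernel_bpt_le hz θ))

theorem integral_harmonicMeasure_comp_bpt {E : Type*} [NormedAddCommGroup E] [NormedSpace ℂ E]
    [CompleteSpace E] {K : ℂ → E} (hK : DiffContOnCl ℂ K (ball 0 1)) (hz : ‖z‖ < 1) :
    ∫ θ, K (bpt θ) ∂harmonicMeasure z = K z := by
  rw [integral_harmonicMeasure hz, ← hK.circleAverage_poissonKernel_smul (mem_ball_zero_iff.2 hz)]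
  exact integral_arcM_comp_bpt (poissonKernel 0 z • K)

theorem isProbabilityMeasure_harmonicMeasure (hz : ‖z‖ < 1) :
    IsProbabilityMeasure (harmonicMeasure z) := by
  have hone := integral_harmonicMeasure_comp_bpt (K := fun _ => (1 : ℂ)) diffContOnCl_const hz
  rw [integral_const, real_smul, mul_one, ofReal_eq_one] at hone
  exact isProbabilityMeasure_iff_real.2 hone

theorem integral_harmonicMeasure_le (hz : ‖z‖ < 1) {g : ℝ → ℝ} (hg : Continuous g)
    (hg0 : ∀ θ, 0 ≤ g θ) :
    ∫ θ, g θ ∂harmonicMeasure z ≤ (1 + ‖z‖) / (1 - ‖z‖) * ∫ θ, g θ ∂arcM := by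
  have hL : 0 ≤ (1 + ‖z‖) / (1 - ‖z‖) := div_nonneg (by positivity) (by linarith)
  calc ∫ θ, g θ ∂harmonicMeasure z
      ≤ ∫ θ, g θ ∂(ENNReal.ofReal ((1 + ‖z‖) / (1 - ‖z‖)) • arcM) :=
        integral_mono_measure (harmonicMeasure_le hz) (.of_forall hg0)
          ((integrable_arcM_of_continuous hg).smul_measure ENNReal.ofReal_ne_top)
    _ = (1 + ‖z‖) / (1 - ‖z‖) * ∫ θ, g θ ∂arcM := by
        rw [integral_smul_measure, ENNReal.toReal_ofReal hL, smul_eq_mul]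

theorem integrable_harmonicMeasure_of_continuous {E : Type*} [NormedAddCommGroup E] (hz : ‖z‖ < 1)
    {g : ℝ → E} (hg : Continuous g) : Integrable g (harmonicMeasure z) :=
  ((integrable_arcM_of_continuous hg).smul_measure ENNReal.ofReal_ne_top).mono_measure
    (harmonicMeasure_le hz)

theorem integrable_poissonKernel_mul {ρ : ℝ} (hρ : ρ ∈ Ico (0 : ℝ) 1) {g : ℝ → ℝ}
    (hg : Continuous g) :
    Integrable (fun x : ℝ × ℝ => poissonKernel 0 (ρ * bpt x.1) (bpt x.2) * g x.2)
      (arcM.prod arcM) := by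
  have hz := norm_ofReal_mul_bpt_lt_one hρ
  refine ((integrable_arcM_of_continuous hg).comp_snd arcM).bdd_mul (c := (1 + ρ) / (1 - ρ)) ?_ ?_
  · exact (continuousOn_poissonKernel_bpt.comp_continuous
      (f := fun x : ℝ × ℝ => ((ρ : ℂ) * bpt x.1, x.2)) (by fun_prop)
      fun x => hz x.1).aestronglyMeasurable
  · refine .of_forall fun x => ?_
    rw [Real.norm_of_nonneg (poissonKernel_bpt_nonneg (hz _) _)]
    simpa only [norm_ofReal_mul_bpt hρ.1] using poissonKernel_bpt_le (hz x.1) x.2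

theorem integrable_integral_harmonicMeasure {ρ : ℝ} (hρ : ρ ∈ Ico (0 : ℝ) 1) {g : ℝ → ℝ}
    (hg : Continuous g) : Integrable (fun t => ∫ θ, g θ ∂harmonicMeasure (ρ * bpt t)) arcM := by
  have hz := norm_ofReal_mul_bpt_lt_one hρ
  simp only [integral_harmonicMeasure (hz _), smul_eq_mul]
  exact (integrable_poissonKernel_mul hρ hg).integral_prod_left

theorem integral_integral_harmonicMeasure {ρ : ℝ} (hρ : ρ ∈ Ico (0 : ℝ) 1) {g : ℝ → ℝ}
    (hg : Continuous g) :
    ∫ t, ∫ θ, g θ ∂harmonicMeasure (ρ * bpt t) ∂arcM = ∫ θ, g θ ∂arcM := by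
  have hz := norm_ofReal_mul_bpt_lt_one hρ
  have hmass : ∀ θ, ∫ t, poissonKernel 0 (ρ * bpt t) (bpt θ) ∂arcM = 1 := fun θ => by
    have := isProbabilityMeasure_harmonicMeasure (hz θ)
    simp only [poissonKernel_ofReal_mul_bpt_comm ρ _ θ]
    simpa using (integral_harmonicMeasure (hz θ) (fun _ => (1 : ℝ))).symm
  simp only [integral_harmonicMeasure (hz _), smul_eq_mul]
  rw [integral_integral_swap (integrable_poissonKernel_mul hρ hg)]
  simp only [integral_mul_const, hmass, one_mul]

end HarmonicMeasure

section OuterMajorant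

/-- `F` has an outer majorant of order `s`: a function `K` holomorphic on the disc and continuous up
to the circle, with `|F|^s ≤ |K|` inside and equality on the circle. For a polynomial `F` one takes
the `s`-th power of the outer factor; its Poisson integral gives the subharmonicity of `|F|^s`. -/
def HasOuterMajorant (s : ℝ) (F : ℂ → ℂ) : Prop :=
  ∃ K : ℂ → ℂ, DiffContOnCl ℂ K (ball 0 1) ∧ (∀ w ∈ ball (0 : ℂ) 1, ‖F w‖ ^ s ≤ ‖K w‖) ∧
    ∀ w ∈ sphere (0 : ℂ) 1, ‖K w‖ = ‖F w‖ ^ s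

variable {s : ℝ}

theorem diffContOnCl_one_sub_mul_cpow (hs : 0 < s) {b : ℂ} (hb : ‖b‖ ≤ 1) :
    DiffContOnCl ℂ (fun w => (1 - b * w) ^ (s : ℂ)) (ball 0 1) := by
  have hre : ∀ w : ℂ, 1 - ‖w‖ ≤ (1 - b * w).re := fun w => by
    have : (b * w).re ≤ ‖w‖ := (re_le_norm _).trans <| by
      rw [norm_mul]; exact mul_le_of_le_one_left (norm_nonneg w) hb
    simp only [sub_re, one_re]; linarith
  constructor
  · intro w hw
    have hpos : 0 < (1 - b * w).re := (sub_pos.2 (mem_ball_zero_iff.1 hw)).trans_le (hre w)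
    exact ((show DifferentiableAt ℂ (fun w => 1 - b * w) w by fun_prop).cpow_const
      (.inl hpos)).differentiableWithinAt
  · intro w hw
    rw [closure_ball _ one_ne_zero] at hw
    have hnonneg : 0 ≤ (1 - b * w).re :=
      (sub_nonneg.2 (mem_closedBall_zero_iff.1 hw)).trans (hre w)
    have hcont :=
      continuousAt_cpow_const_of_re_pos (.inl hnonneg) (w := (s : ℂ)) (by simpa using hs)
    exact (ContinuousAt.comp (f := fun w => 1 - b * w) hcont (by fun_prop)).continuousWithinAt

namespace HasOuterMajorant

theorem mul {F G : ℂ → ℂ} (hF : HasOuterMajorant s F) (hG : HasOuterMajorant s G) :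
    HasOuterMajorant s fun w => F w * G w := by
  obtain ⟨K, hK, hFK, hKF⟩ := hF
  obtain ⟨L, hL, hGL, hLG⟩ := hG
  refine ⟨fun w => K w * L w, hK.smul hL, fun w hw => ?_, fun w hw => ?_⟩
  · rw [norm_mul, norm_mul, Real.mul_rpow (norm_nonneg _) (norm_nonneg _)]
    exact mul_le_mul (hFK w hw) (hGL w hw) (by positivity) (norm_nonneg _)
  · rw [norm_mul, norm_mul, Real.mul_rpow (norm_nonneg _) (norm_nonneg _), hKF w hw, hLG w hw]

theorem const (s : ℝ) (c : ℂ) : HasOuterMajorant s fun _ => c := by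
  have hnorm : ‖((‖c‖ ^ s : ℝ) : ℂ)‖ = ‖c‖ ^ s := by
    rw [norm_real, Real.norm_of_nonneg (by positivity)]
  exact ⟨fun _ => ((‖c‖ ^ s : ℝ) : ℂ), diffContOnCl_const, fun _ _ => hnorm.ge, fun _ _ => hnorm⟩

theorem sub_const_of_norm_le_one (hs : 0 < s) {a : ℂ} (ha : ‖a‖ ≤ 1) :
    HasOuterMajorant s fun w => w - a := by
  have hsq : ∀ w : ℂ, ‖1 - conj a * w‖ ^ 2 - ‖w - a‖ ^ 2 = (1 - ‖w‖ ^ 2) * (1 - ‖a‖ ^ 2) := by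
    intro w
    simp only [← Complex.normSq_eq_norm_sq, Complex.normSq_apply, sub_re, sub_im, mul_re, mul_im,
      one_re, one_im, conj_re, conj_im]
    ring
  refine ⟨fun w => (1 - conj a * w) ^ (s : ℂ), diffContOnCl_one_sub_mul_cpow hs (by simpa using ha),
    fun w hw => ?_, fun w hw => ?_⟩
  · have hw1 : ‖w‖ ≤ 1 := (mem_ball_zero_iff.1 hw).le
    have hprod : 0 ≤ (1 - ‖w‖ ^ 2) * (1 - ‖a‖ ^ 2) :=
      mul_nonneg (sub_nonneg.2 (pow_le_one₀ (norm_nonneg w) hw1))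
        (sub_nonneg.2 (pow_le_one₀ (norm_nonneg a) ha))
    rw [norm_cpow_real]
    gcongr
    exact le_of_sq_le_sq (by linarith [hsq w]) (norm_nonneg _)
  · have hw1 : ‖w‖ = 1 := mem_sphere_zero_iff_norm.1 hw
    have hw2 := hsq w
    rw [hw1, one_pow, sub_self, zero_mul, sub_eq_zero] at hw2
    rw [norm_cpow_real, (sq_eq_sq₀ (norm_nonneg _) (norm_nonneg _)).1 hw2]

theorem sub_const (hs : 0 < s) (a : ℂ) : HasOuterMajorant s fun w => w - a := by
  rcases le_total ‖a‖ 1 with ha | ha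
  · exact sub_const_of_norm_le_one hs ha
  · have ha0 : a ≠ 0 := norm_pos_iff.1 (one_pos.trans_le ha)
    have hfactor : (fun w : ℂ => w - a) = fun w => -a * (1 - a⁻¹ * w) := by
      ext w; field_simp; ring
    have hb : ‖a⁻¹‖ ≤ 1 := by rw [norm_inv]; exact inv_le_one_of_one_le₀ ha
    rw [hfactor]
    exact (const s (-a)).mul ⟨_, diffContOnCl_one_sub_mul_cpow hs hb,
      fun w _ => (norm_cpow_real _ s).ge, fun w _ => norm_cpow_real _ s⟩

theorem polynomial_eval (hs : 0 < s) (P : ℂ[X]) : HasOuterMajorant s fun w => P.eval w := by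
  simp only [(IsAlgClosed.splits P).eval_eq_prod_roots]
  refine (const s _).mul ?_
  induction P.roots using Multiset.induction with
  | empty => simpa using const s 1
  | cons a m ih => simpa using (sub_const hs a).mul ih

theorem norm_rpow_le_integral {F : ℂ → ℂ} (hF : HasOuterMajorant s F) {z : ℂ} (hz : ‖z‖ < 1) :
    ‖F z‖ ^ s ≤ ∫ θ, ‖F (bpt θ)‖ ^ s ∂harmonicMeasure z := by
  obtain ⟨K, hK, hFK, hKF⟩ := hF
  calc ‖F z‖ ^ s ≤ ‖K z‖ := hFK z (mem_ball_zero_iff.2 hz)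
    _ = ‖∫ θ, K (bpt θ) ∂harmonicMeasure z‖ := by rw [integral_harmonicMeasure_comp_bpt hK hz]
    _ ≤ ∫ θ, ‖K (bpt θ)‖ ∂harmonicMeasure z := norm_integral_le_integral_norm _
    _ = ∫ θ, ‖F (bpt θ)‖ ^ s ∂harmonicMeasure z := by
        simp only [hKF (bpt _) (by simp)]

end HasOuterMajorant

end OuterMajorant

section Subharmonic

variable {h : ℂ → ℂ} {r s : ℝ}

theorem exists_polynomial_tendstoUniformlyOn {R : ℝ} (hh : DifferentiableOn ℂ h (ball 0 R))
    (hr : 0 ≤ r) (hrR : r < R) :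
    ∃ P : ℕ → ℂ[X], TendstoUniformlyOn (fun n w => (P n).eval w) h atTop (closedBall 0 r) := by
  obtain ⟨ρ, hrρ, hρR⟩ := exists_between hrR
  lift ρ to NNReal using hr.trans hrρ.le
  lift r to NNReal using hr
  have hseries := (hh.mono (closedBall_subset_ball hρR)).hasFPowerSeriesOnBall
    (NNReal.coe_pos.1 (NNReal.coe_nonneg r |>.trans_lt hrρ))
  obtain ⟨r', hrr', hr'ρ⟩ := exists_between (NNReal.coe_lt_coe.1 hrρ)
  refine ⟨fun n => ∑ k ∈ Finset.range n, C ((cauchyPowerSeries h 0 ρ).coeff k) * X ^ k, ?_⟩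
  refine ((hseries.tendstoUniformlyOn (ENNReal.coe_lt_coe.2 hr'ρ)).mono
    (closedBall_subset_ball (NNReal.coe_lt_coe.2 hrr'))).congr ?_ |>.congr_right ?_
  · refine .of_forall fun n w _ => ?_
    simp only [FormalMultilinearSeries.partialSum, eval_finsetSum, eval_mul, eval_C, eval_pow,
      eval_X, FormalMultilinearSeries.apply_eq_pow_smul_coeff, smul_eq_mul, mul_comm]
  · intro w _
    simp

theorem continuous_comp_mul_bpt (hh : AnalyticOnDisc h) (hr : r ∈ Ico (0 : ℝ) 1) :
    Continuous fun θ => h (r * bpt θ) :=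
  hh.continuousOn.comp_continuous (by fun_prop) fun θ =>
    mem_uDisc.2 (norm_ofReal_mul_bpt_lt_one hr θ)

theorem continuous_norm_rpow_comp_mul_bpt (hh : AnalyticOnDisc h) (hs : 0 ≤ s)
    (hr : r ∈ Ico (0 : ℝ) 1) : Continuous fun θ => ‖h (r * bpt θ)‖ ^ s :=
  (continuous_comp_mul_bpt hh hr).norm.rpow_const fun _ => .inr hs

theorem norm_rpow_le_integral_harmonicMeasure (hh : AnalyticOnDisc h) (hs : 0 < s)
    (hr : r ∈ Ico (0 : ℝ) 1) {z : ℂ} (hz : ‖z‖ < 1) :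
    ‖h (r * z)‖ ^ s ≤ ∫ θ, ‖h (r * bpt θ)‖ ^ s ∂harmonicMeasure z := by
  obtain ⟨P, hP⟩ := exists_polynomial_tendstoUniformlyOn hh hr.1 hr.2
  have hmem : ∀ w : ℂ, ‖w‖ ≤ 1 → r * w ∈ closedBall (0 : ℂ) r := fun w hw => by
    rw [mem_closedBall_zero_iff, norm_mul, norm_real, Real.norm_of_nonneg hr.1]
    exact mul_le_of_le_one_right hr.1 hw
  have hlim : ∀ w : ℂ, ‖w‖ ≤ 1 →
      Tendsto (fun n => ‖(P n).eval (r * w)‖ ^ s) atTop (𝓝 (‖h (r * w)‖ ^ s)) := fun w hw =>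
    (hP.tendsto_at (hmem w hw)).norm.rpow_const (.inr hs.le)
  have hle : ∀ n, ‖(P n).eval (r * z)‖ ^ s ≤
      ∫ θ, ‖(P n).eval (r * bpt θ)‖ ^ s ∂harmonicMeasure z := fun n => by
    have hmaj := HasOuterMajorant.polynomial_eval hs ((P n).comp (C (r : ℂ) * X))
    simpa only [eval_comp, eval_mul, eval_C, eval_X] using hmaj.norm_rpow_le_integral hz
  refine le_of_tendsto_of_tendsto' (hlim z hz.le) ?_ hle
  refine tendsto_integral_filter_of_dominated_convergence
    (fun θ => (‖h (r * bpt θ)‖ + 1) ^ s) (.of_forall fun n => ?_) ?_ ?_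
    (.of_forall fun θ => hlim _ (norm_bpt θ).le)
  · exact (((P n).continuous.comp (by fun_prop)).norm.rpow_const
      fun _ => .inr hs.le).aestronglyMeasurable
  · filter_upwards [Metric.tendstoUniformlyOn_iff.1 hP 1 one_pos] with n hn
    refine .of_forall fun θ => ?_
    have hclose := hn _ (hmem _ (norm_bpt θ).le)
    rw [dist_comm, dist_eq_norm] at hclose
    rw [Real.norm_of_nonneg (by positivity)]
    gcongr
    linarith [norm_sub_norm_le ((P n).eval (r * bpt θ)) (h (r * bpt θ))]
  · exact integrable_harmonicMeasure_of_continuous hz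
      (((continuous_comp_mul_bpt hh hr).norm.add continuous_const).rpow_const fun _ => .inr hs.le)

theorem norm_rpow_le_mul_hMean (hh : AnalyticOnDisc h) (hs : 0 < s) (hr : r ∈ Ioo (0 : ℝ) 1)
    {z : ℂ} (hz : ‖z‖ ≤ r ^ 2) : ‖h z‖ ^ s ≤ (1 + r) / (1 - r) * hMean s h r := by
  have hr0 : 0 < r := hr.1
  have hr1 : 0 < 1 - r := sub_pos.2 hr.2
  have hzr : ‖z / r‖ ≤ r := by
    rwa [norm_div, norm_real, Real.norm_of_nonneg hr.1.le, div_le_iff₀ hr.1, ← sq]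
  have hzr1 : ‖z / r‖ < 1 := hzr.trans_lt hr.2
  have hrz : (r : ℂ) * (z / r) = z := mul_div_cancel₀ z (ofReal_ne_zero.2 hr.1.ne')
  have hcont := continuous_norm_rpow_comp_mul_bpt hh hs.le (Ioo_subset_Ico_self hr)
  calc ‖h z‖ ^ s ≤ ∫ θ, ‖h (r * bpt θ)‖ ^ s ∂harmonicMeasure (z / r) := by
        simpa only [hrz] using
          norm_rpow_le_integral_harmonicMeasure hh hs (Ioo_subset_Ico_self hr) hzr1
    _ ≤ (1 + ‖z / r‖) / (1 - ‖z / r‖) * hMean s h r :=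
        integral_harmonicMeasure_le hzr1 hcont fun θ => by positivity
    _ ≤ (1 + r) / (1 - r) * hMean s h r := by
        have := hMean_nonneg s h r
        gcongr

end Subharmonic

section InnerDivision

variable {h ϑ : ℂ → ℂ} {p q r s : ℝ}

theorem memLp_arcM_of_continuous {E : Type*} [NormedAddCommGroup E] {g : ℝ → E}
    (hg : Continuous g) (hp : 0 < p) : MemLp g (ENNReal.ofReal p) arcM := by
  have hg_ae : AEStronglyMeasurable g arcM := (integrable_arcM_of_continuous hg).1
  rw [← integrable_norm_rpow_iff hg_ae (by simpa using hp) ENNReal.ofReal_ne_top,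
    ENNReal.toReal_ofReal hp.le]
  exact integrable_arcM_of_continuous (hg.norm.rpow_const fun _ => .inr hp.le)

theorem rpow_integral_harmonicMeasure_le {z : ℂ} (hz : ‖z‖ < 1) {m : ℝ} (hm : 1 ≤ m) {g : ℝ → ℝ}
    (hg : Continuous g) (hg0 : ∀ θ, 0 ≤ g θ) :
    (∫ θ, g θ ∂harmonicMeasure z) ^ m ≤ ∫ θ, g θ ^ m ∂harmonicMeasure z := by
  have := isProbabilityMeasure_harmonicMeasure hz
  have hm0 : 0 ≤ m := zero_le_one.trans hm
  exact (convexOn_rpow hm).map_integral_le (continuousOn_id.rpow_const fun _ _ => .inr hm0)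
    isClosed_Ici (.of_forall hg0) (integrable_harmonicMeasure_of_continuous hz hg)
    (integrable_harmonicMeasure_of_continuous hz (hg.rpow_const fun _ => .inr hm0))

theorem continuous_abs_one_sub_norm_rpow (hϑ : AnalyticOnDisc ϑ) (hs : 0 ≤ s)
    (hr : r ∈ Ico (0 : ℝ) 1) : Continuous fun θ => |1 - ‖ϑ (r * bpt θ)‖ ^ s| :=
  (continuous_const.sub (continuous_norm_rpow_comp_mul_bpt hϑ hs hr)).abs

theorem eventually_mem_Ioo_nhdsLT_one : ∀ᶠ r : ℝ in 𝓝[<] 1, r ∈ Ioo (0 : ℝ) 1 :=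
  Ioo_mem_nhdsLT one_pos

/-- The error `∫ |h(rζ)|^s | 1 - |ϑ(rζ)|^s | dm(ζ)` made when `|h|^s` is replaced by `|ϑh|^s` on the
circle of radius `r`; it vanishes as `r → 1` when `ϑ` is inner and `h` lies in a Hardy space `H^p`
with `p > s`. -/
def innerDefect (s : ℝ) (ϑ h : ℂ → ℂ) (r : ℝ) : ℝ :=
  ∫ θ, ‖h (r * bpt θ)‖ ^ s * |1 - ‖ϑ (r * bpt θ)‖ ^ s| ∂arcM

theorem IsInner.analyticOnDisc (hϑ : IsInner ϑ) : AnalyticOnDisc ϑ := hϑ.1.1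

theorem IsInner.tendsto_integral_abs_one_sub_rpow (hϑ : IsInner ϑ) (hs : 0 < s) {b : ℝ}
    (hb : 0 < b) :
    Tendsto (fun r : ℝ => ∫ θ, |1 - ‖ϑ (r * bpt θ)‖ ^ s| ^ b ∂arcM) (𝓝[<] 1) (𝓝 0) := by
  obtain ⟨⟨hϑan, M, hM⟩, Θ, hbdry, hΘ⟩ := hϑ
  have hlim : Tendsto (fun r : ℝ => ∫ θ, |1 - ‖ϑ (r * bpt θ)‖ ^ s| ^ b ∂arcM) (𝓝[<] 1)
      (𝓝 (∫ _, (0 : ℝ) ∂arcM)) := by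
    refine tendsto_integral_filter_of_dominated_convergence (fun _ => (1 + M ^ s) ^ b) ?_ ?_
      (integrable_const _) ?_
    · filter_upwards [eventually_mem_Ioo_nhdsLT_one] with r hr
      exact ((continuous_abs_one_sub_norm_rpow hϑan hs.le (Ioo_subset_Ico_self hr)).rpow_const
        fun _ => .inr hb.le).aestronglyMeasurable
    · filter_upwards [eventually_mem_Ioo_nhdsLT_one] with r hr
      refine .of_forall fun θ => ?_
      have hle : ‖ϑ (r * bpt θ)‖ ^ s ≤ M ^ s :=
        Real.rpow_le_rpow (norm_nonneg _)
          (hM _ (mem_uDisc.2 (norm_ofReal_mul_bpt_lt_one (Ioo_subset_Ico_self hr) θ))) hs.le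
      have hnonneg : 0 ≤ ‖ϑ (r * bpt θ)‖ ^ s := by positivity
      rw [Real.norm_of_nonneg (by positivity)]
      gcongr
      exact abs_le.2 ⟨by linarith, by linarith⟩
    · filter_upwards [hbdry, hΘ] with θ hθ hΘθ
      have hdefect := ((hθ.norm.rpow_const (.inr hs.le)).const_sub 1).abs.rpow_const (.inr hb.le)
      simpa only [hΘθ, Real.one_rpow, sub_self, abs_zero, Real.zero_rpow hb.ne'] using hdefect
  rwa [integral_zero] at hlim

theorem innerDefect_le (hh : AnalyticOnDisc h) (hϑ : AnalyticOnDisc ϑ) (hs : 0 < s)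
    {b : ℝ} (hpb : (p / s).HolderConjugate b) (hr : r ∈ Ico (0 : ℝ) 1) :
    innerDefect s ϑ h r ≤
      hMean p h r ^ (1 / (p / s)) * (∫ θ, |1 - ‖ϑ (r * bpt θ)‖ ^ s| ^ b ∂arcM) ^ (1 / b) := by
  have hhs : ∀ θ, ‖h (r * bpt θ)‖ ^ p = (‖h (r * bpt θ)‖ ^ s) ^ (p / s) := fun θ => by
    rw [← Real.rpow_mul (norm_nonneg _), mul_div_cancel₀ p hs.ne']
  simp only [innerDefect, hMean, hhs]
  exact integral_mul_le_Lp_mul_Lq_of_nonneg hpb (.of_forall fun θ => by positivity)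
    (.of_forall fun θ => abs_nonneg _)
    (memLp_arcM_of_continuous (continuous_norm_rpow_comp_mul_bpt hh hs.le hr) hpb.pos)
    (memLp_arcM_of_continuous (continuous_abs_one_sub_norm_rpow hϑ hs.le hr) hpb.symm.pos)

theorem IsInner.tendsto_innerDefect (hϑ : IsInner ϑ) (hh : MemHp p h) (hs : 0 < s)
    (hsp : s < p) :
    Tendsto (innerDefect s ϑ h) (𝓝[<] 1) (𝓝 0) := by
  have hpb := Real.HolderConjugate.conjExponent ((one_lt_div hs).2 hsp)
  set b := (p / s).conjExponent
  obtain ⟨A, hA⟩ := hh.2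
  have hdefect : Tendsto (fun r : ℝ => A ^ (1 / (p / s)) *
      (∫ θ, |1 - ‖ϑ (r * bpt θ)‖ ^ s| ^ b ∂arcM) ^ (1 / b)) (𝓝[<] 1) (𝓝 0) := by
    have hb : 0 < 1 / b := one_div_pos.2 hpb.symm.pos
    simpa only [Real.zero_rpow hb.ne', mul_zero] using
      ((hϑ.tendsto_integral_abs_one_sub_rpow hs hpb.symm.pos).rpow_const
        (.inr hb.le)).const_mul (A ^ (1 / (p / s)))
  refine squeeze_zero' (.of_forall fun r => integral_nonneg fun θ => by positivity) ?_ hdefect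
  filter_upwards [eventually_mem_Ioo_nhdsLT_one] with r hr
  have hps : 0 ≤ 1 / (p / s) := one_div_nonneg.2 hpb.pos.le
  refine (innerDefect_le hh.1 hϑ.analyticOnDisc hs hpb (Ioo_subset_Ico_self hr)).trans ?_
  gcongr
  · exact hMean_nonneg p h r
  · exact hA (mem_image_of_mem _ hr)

theorem norm_rpow_le_integral_mul_add (hh : AnalyticOnDisc h) (hϑ : AnalyticOnDisc ϑ) (hs : 0 < s)
    (hr : r ∈ Ico (0 : ℝ) 1) {z : ℂ} (hz : ‖z‖ < 1) :
    ‖h (r * z)‖ ^ s ≤ ∫ θ, ‖ϑ (r * bpt θ) * h (r * bpt θ)‖ ^ s ∂harmonicMeasure z +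
      (1 + ‖z‖) / (1 - ‖z‖) * innerDefect s ϑ h r := by
  have hfcont : Continuous fun θ => ‖ϑ (r * bpt θ) * h (r * bpt θ)‖ ^ s :=
    continuous_norm_rpow_comp_mul_bpt (hϑ.mul hh) hs.le hr
  have hecont : Continuous fun θ => ‖h (r * bpt θ)‖ ^ s * |1 - ‖ϑ (r * bpt θ)‖ ^ s| :=
    (continuous_norm_rpow_comp_mul_bpt hh hs.le hr).mul
      (continuous_abs_one_sub_norm_rpow hϑ hs.le hr)
  have hsplit : ∀ θ, ‖h (r * bpt θ)‖ ^ s ≤ ‖ϑ (r * bpt θ) * h (r * bpt θ)‖ ^ s +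
      ‖h (r * bpt θ)‖ ^ s * |1 - ‖ϑ (r * bpt θ)‖ ^ s| := fun θ => by
    have hle := mul_le_mul_of_nonneg_left (le_abs_self (1 - ‖ϑ (r * bpt θ)‖ ^ s))
      (Real.rpow_nonneg (norm_nonneg (h (r * bpt θ))) s)
    rw [norm_mul, Real.mul_rpow (norm_nonneg _) (norm_nonneg _)]
    linarith
  have hfint := integrable_harmonicMeasure_of_continuous hz hfcont
  have heint := integrable_harmonicMeasure_of_continuous hz hecont
  calc ‖h (r * z)‖ ^ s ≤ ∫ θ, ‖h (r * bpt θ)‖ ^ s ∂harmonicMeasure z :=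
        norm_rpow_le_integral_harmonicMeasure hh hs hr hz
    _ ≤ ∫ θ, (‖ϑ (r * bpt θ) * h (r * bpt θ)‖ ^ s +
          ‖h (r * bpt θ)‖ ^ s * |1 - ‖ϑ (r * bpt θ)‖ ^ s|) ∂harmonicMeasure z :=
        integral_mono (integrable_harmonicMeasure_of_continuous hz
          (continuous_norm_rpow_comp_mul_bpt hh hs.le hr)) (hfint.add heint) hsplit
    _ ≤ _ := by
        rw [integral_add hfint heint]
        gcongr
        exact integral_harmonicMeasure_le hz hecont fun θ => by positivity

theorem integral_max_sub_rpow_le_hMean (hh : AnalyticOnDisc h) (hϑ : AnalyticOnDisc ϑ) (hs : 0 < s)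
    (hsq : s ≤ q) (hr : r ∈ Ioo (0 : ℝ) 1) {κ : ℝ} (hκ : κ ∈ Ico (0 : ℝ) 1) :
    ∫ t, max (‖h (r * (κ * bpt t))‖ ^ s -
        (1 + κ) / (1 - κ) * innerDefect s ϑ h r) 0 ^ (q / s) ∂arcM ≤
      hMean q (fun z => ϑ z * h z) r := by
  set δ := (1 + κ) / (1 - κ) * innerDefect s ϑ h r
  have hr' := Ioo_subset_Ico_self hr
  have hq : 0 ≤ q := hs.le.trans hsq
  have hm : 1 ≤ q / s := (one_le_div hs).2 hsq
  have hz := norm_ofReal_mul_bpt_lt_one hκ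
  have hrκ : r * κ ∈ Ico (0 : ℝ) 1 :=
    ⟨mul_nonneg hr.1.le hκ.1, mul_lt_one_of_nonneg_of_lt_one_left hr.1.le hr.2 hκ.2.le⟩
  have hcont : Continuous fun t => max (‖h (r * (κ * bpt t))‖ ^ s - δ) 0 ^ (q / s) := by
    have hhcont := continuous_norm_rpow_comp_mul_bpt hh hs.le hrκ
    simp only [ofReal_mul, mul_assoc] at hhcont
    exact ((hhcont.sub continuous_const).max continuous_const).rpow_const
      fun _ => .inr (by positivity)
  have hpoint : ∀ t, max (‖h (r * (κ * bpt t))‖ ^ s - δ) 0 ^ (q / s) ≤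
      ∫ θ, ‖ϑ (r * bpt θ) * h (r * bpt θ)‖ ^ q ∂harmonicMeasure (κ * bpt t) := fun t => by
    have hle := norm_rpow_le_integral_mul_add hh hϑ hs hr' (hz t)
    rw [norm_ofReal_mul_bpt hκ.1] at hle
    have hjensen := rpow_integral_harmonicMeasure_le (hz t) hm
      (continuous_norm_rpow_comp_mul_bpt (hϑ.mul hh) hs.le hr') fun θ => by positivity
    simp only [← Real.rpow_mul (norm_nonneg _), mul_div_cancel₀ q hs.ne'] at hjensen
    refine (Real.rpow_le_rpow (le_max_right _ _) ?_ (by positivity)).trans hjensen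
    exact max_le (sub_le_iff_le_add.2 hle) (integral_nonneg fun θ => by positivity)
  have hfcont := continuous_norm_rpow_comp_mul_bpt (hϑ.mul hh) hq hr'
  exact (integral_mono (integrable_arcM_of_continuous hcont)
    (integrable_integral_harmonicMeasure hκ hfcont) hpoint).trans
    (integral_integral_harmonicMeasure hκ hfcont).le

theorem tendsto_integral_max_sub_rpow {ι : Type*} {l : Filter ι} [l.IsCountablyGenerated] {m : ℝ}
    (hm : 0 ≤ m) {u : ℝ → ℝ} (hu : Continuous u) (hu0 : ∀ t, 0 ≤ u t) {δ : ι → ℝ}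
    (hδ : Tendsto δ l (𝓝 0)) :
    Tendsto (fun i => ∫ t, max (u t - δ i) 0 ^ m ∂arcM) l (𝓝 (∫ t, u t ^ m ∂arcM)) := by
  refine tendsto_integral_filter_of_dominated_convergence (fun t => (u t + 1) ^ m)
    (.of_forall fun i => ?_) ?_ ?_ (.of_forall fun t => ?_)
  · exact (((hu.sub continuous_const).max continuous_const).rpow_const
      fun _ => .inr hm).aestronglyMeasurable
  · filter_upwards [hδ.eventually_const_lt (show (-1 : ℝ) < 0 by norm_num)] with i hi
    refine .of_forall fun t => ?_
    rw [Real.norm_of_nonneg (Real.rpow_nonneg (le_max_right _ _) m)]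
    exact Real.rpow_le_rpow (le_max_right _ _) (max_le (by linarith) (by linarith [hu0 t])) hm
  · exact integrable_arcM_of_continuous ((hu.add continuous_const).rpow_const fun _ => .inr hm)
  · have hlim := ((hδ.const_sub (u t)).max (tendsto_const_nhds (x := (0 : ℝ)))).rpow_const (.inr hm)
    rwa [sub_zero, max_eq_left (hu0 t)] at hlim

theorem IsInner.hMean_le_of_hMean_mul_le (hϑ : IsInner ϑ) (hp : 0 < p) (hh : MemHp p h)
    (hq : 0 < q) {A : ℝ} (hA : ∀ r ∈ Ioo (0 : ℝ) 1, hMean q (fun z => ϑ z * h z) r ≤ A) :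
    ∀ ρ ∈ Ioo (0 : ℝ) 1, hMean q h ρ ≤ A := by
  intro ρ hρ
  obtain ⟨s, hs, hsmin⟩ := exists_between (lt_min hp hq)
  obtain ⟨hsp, hsq⟩ := lt_min_iff.1 hsmin
  set δ : ℝ → ℝ := fun r => (1 + ρ / r) / (1 - ρ / r) * innerDefect s ϑ h r
  have hδ : Tendsto δ (𝓝[<] 1) (𝓝 0) := by
    have hne : 1 - ρ / 1 ≠ 0 := by rw [div_one]; exact (sub_pos.2 hρ.2).ne'
    have hquot : ContinuousAt (fun r : ℝ => (1 + ρ / r) / (1 - ρ / r)) 1 := by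
      fun_prop (disch := first | exact hne | norm_num)
    simpa only [mul_zero] using
      (hquot.tendsto.mono_left nhdsWithin_le_nhds).mul (hϑ.tendsto_innerDefect hh hs hsp)
  have hlim := tendsto_integral_max_sub_rpow (div_nonneg hq.le hs.le)
    (continuous_norm_rpow_comp_mul_bpt hh.1 hs.le (Ioo_subset_Ico_self hρ))
    (fun t => by positivity) hδ
  simp only [← Real.rpow_mul (norm_nonneg _), mul_div_cancel₀ q hs.ne'] at hlim
  refine le_of_tendsto hlim ?_
  filter_upwards [Ioo_mem_nhdsLT hρ.2] with r hr
  have hr0 : 0 < r := hρ.1.trans hr.1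
  have hrκ : ∀ t, (r : ℂ) * ((ρ / r : ℝ) * bpt t) = ρ * bpt t := fun t => by
    rw [← mul_assoc, ← ofReal_mul, mul_div_cancel₀ ρ hr0.ne']
  have hmean := integral_max_sub_rpow_le_hMean hh.1 hϑ.analyticOnDisc hs hsq.le ⟨hr0, hr.2⟩
    (κ := ρ / r) ⟨div_nonneg hρ.1.le hr0.le, (div_lt_one hr0).2 hr.1⟩
  simp only [hrκ] at hmean
  exact hmean.trans (hA r ⟨hr0, hr.2⟩)

end InnerDivision

section NormalFamily

theorem equicontinuousAt_of_differentiableOn_of_norm_le {ι E : Type*} [NormedAddCommGroup E]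
    [NormedSpace ℂ E] {F : ι → ℂ → E} {c : ℂ} {R B : ℝ} (hR : 0 < R)
    (hF : ∀ i, DifferentiableOn ℂ (F i) (ball c R)) (hB : ∀ i, ∀ z ∈ ball c R, ‖F i z‖ ≤ B) :
    EquicontinuousAt F c := by
  have hlim : Tendsto (fun z => (B + B) / R * dist z c) (𝓝 c) (𝓝 0) := by
    have hcont : Continuous fun z => (B + B) / R * dist z c := by fun_prop
    simpa only [dist_self, mul_zero] using hcont.tendsto c
  refine Metric.equicontinuousAt_of_continuity_modulus _ hlim F ?_
  filter_upwards [ball_mem_nhds c hR] with z hz i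
  rw [dist_comm]
  refine Complex.dist_le_div_mul_dist_of_mapsTo_ball (hF i) (fun w hw => ?_) hz
  exact mem_closedBall.2 ((dist_le_norm_add_norm _ _).trans
    (add_le_add (hB i w hw) (hB i c (mem_ball_self hR))))

theorem tendstoLocallyUniformlyOn_of_differentiableOn_of_tendsto {ι E : Type*}
    [NormedAddCommGroup E] [NormedSpace ℂ E] {F : ι → ℂ → E} {f : ℂ → E} {l : Filter ι} {U : Set ℂ}
    (hU : IsOpen U) (hF : ∀ i, DifferentiableOn ℂ (F i) U)
    (hbdd : ∀ c ∈ U, ∃ B, ∀ᶠ z in 𝓝 c, ∀ i, ‖F i z‖ ≤ B)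
    (hlim : ∀ z ∈ U, Tendsto (fun i => F i z) l (𝓝 (f z))) : TendstoLocallyUniformlyOn F f l U := by
  have hequi : ∀ c ∈ U, EquicontinuousAt F c := fun c hc => by
    obtain ⟨B, hB⟩ := hbdd c hc
    obtain ⟨R, hR, hball⟩ := Metric.eventually_nhds_iff_ball.1 (hB.and (hU.mem_nhds hc))
    exact equicontinuousAt_of_differentiableOn_of_norm_le hR
      (fun i => (hF i).mono fun z hz => (hball z hz).2) fun i z hz => (hball z hz).1 i
  refine (tendstoLocallyUniformlyOn_iff_forall_isCompact hU).2 fun K hKU hK => ?_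
  have hKequi : ∀ K' ∈ ({K} : Set (Set ℂ)), EquicontinuousOn F K' := by
    rintro _ rfl c hc
    exact (hequi c (hKU hc)).equicontinuousWithinAt _
  have hK_pi := (EquicontinuousOn.tendsto_uniformOnFun_iff_pi'
      (by simpa using hK) hKequi l f).2 <| by
    rw [tendsto_pi_nhds]
    exact fun z => hlim z (hKU (by simpa using z.2))
  exact UniformOnFun.tendsto_iff_tendstoUniformlyOn.1 hK_pi K rfl

variable {p A : ℝ}

theorem exists_norm_le_of_forall_hMean_le (hp : 0 < p) (A : ℝ) {R : ℝ} (hR : R < 1) :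
    ∃ B, ∀ h, AnalyticOnDisc h → (∀ r ∈ Ioo (0 : ℝ) 1, hMean p h r ≤ A) →
      ∀ z, ‖z‖ ≤ R → ‖h z‖ ≤ B := by
  obtain ⟨a, ha, ha1⟩ := exists_between (max_lt hR one_pos)
  obtain ⟨hRa, ha0⟩ := max_lt_iff.1 ha
  have hr : √a ∈ Ioo (0 : ℝ) 1 :=
    ⟨Real.sqrt_pos.2 ha0, (Real.sqrt_lt' one_pos).2 (by simpa using ha1)⟩
  refine ⟨((1 + √a) / (1 - √a) * A) ^ p⁻¹, fun h hh hA z hz => ?_⟩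
  have hr1 : 0 < 1 - √a := sub_pos.2 hr.2
  have hle : ‖h z‖ ^ p ≤ (1 + √a) / (1 - √a) * A := by
    refine (norm_rpow_le_mul_hMean hh hp hr ?_).trans (by gcongr; exact hA _ hr)
    exact (hz.trans hRa.le).trans_eq (Real.sq_sqrt ha0.le).symm
  have hnonneg : 0 ≤ (1 + √a) / (1 - √a) * A := le_trans (by positivity) hle
  exact (Real.le_rpow_inv_iff_of_pos (norm_nonneg _) hnonneg hp).2 hle

theorem hMean_le_of_tendstoUniformlyOn {ι : Type*} {l : Filter ι} [l.NeBot] {F : ι → ℂ → ℂ}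
    {f : ℂ → ℂ} (hp : 0 ≤ p) (hF : ∀ i, AnalyticOnDisc (F i)) (hf : AnalyticOnDisc f) {r : ℝ}
    (hr : r ∈ Ico (0 : ℝ) 1) (hlim : TendstoUniformlyOn F f l (sphere 0 r))
    (hA : ∀ i, hMean p (F i) r ≤ A) : hMean p f r ≤ A := by
  have hfcont := (continuous_comp_mul_bpt hf hr).norm
  have hε : ∀ ε > 0, ∫ θ, max (‖f (r * bpt θ)‖ - ε) 0 ^ p ∂arcM ≤ A := fun ε hε => by
    obtain ⟨i, hi⟩ := (Metric.tendstoUniformlyOn_iff.1 hlim ε hε).exists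
    have hmaxcont : Continuous fun θ => max (‖f (r * bpt θ)‖ - ε) 0 ^ p :=
      ((hfcont.sub continuous_const).max continuous_const).rpow_const fun _ => .inr hp
    refine (integral_mono (integrable_arcM_of_continuous hmaxcont) (integrable_arcM_of_continuous
      (continuous_norm_rpow_comp_mul_bpt (hF i) hp hr)) fun θ => ?_).trans (hA i)
    have hclose := hi (r * bpt θ) (mem_sphere_zero_iff_norm.2 (norm_ofReal_mul_bpt hr.1 θ))
    rw [dist_eq_norm] at hclose
    refine Real.rpow_le_rpow (le_max_right _ _) (max_le ?_ (norm_nonneg _)) hp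
    linarith [norm_sub_norm_le (f (r * bpt θ)) (F i (r * bpt θ))]
  have hzero : Tendsto (fun ε : ℝ => ε) (𝓝[>] 0) (𝓝 0) := tendsto_id.mono_left nhdsWithin_le_nhds
  refine le_of_tendsto
    (tendsto_integral_max_sub_rpow hp hfcont (fun _ => norm_nonneg _) hzero) ?_
  filter_upwards [self_mem_nhdsWithin] with ε hε0 using hε ε hε0

theorem exists_memHp_tendsto_of_forall_hMean_le {ι : Type*} (U : Ultrafilter ι) {F : ι → ℂ → ℂ}
    (hp : 0 < p) (hF : ∀ i, AnalyticOnDisc (F i))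
    (hA : ∀ i, ∀ r ∈ Ioo (0 : ℝ) 1, hMean p (F i) r ≤ A) :
    ∃ f, MemHp p f ∧ ∀ z ∈ uDisc, Tendsto (fun i => F i z) U (𝓝 (f z)) := by
  have hex : ∀ z ∈ uDisc, ∃ w, Tendsto (fun i => F i z) U (𝓝 w) := fun z hz => by
    obtain ⟨B, hB⟩ := exists_norm_le_of_forall_hMean_le hp A (mem_uDisc.1 hz)
    obtain ⟨w, -, hw⟩ := (isCompact_closedBall (0 : ℂ) B).ultrafilter_le_nhds' (U.map (F · z))
      (Ultrafilter.mem_map.2 <| univ_mem' fun i =>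
        mem_closedBall_zero_iff.2 (hB _ (hF i) (hA i) z le_rfl))
    exact ⟨w, hw⟩
  choose! f hf using hex
  have hbdd : ∀ c ∈ uDisc, ∃ B, ∀ᶠ z in 𝓝 c, ∀ i, ‖F i z‖ ≤ B := fun c hc => by
    obtain ⟨R, hcR, hR⟩ := exists_between (mem_uDisc.1 hc)
    obtain ⟨B, hB⟩ := exists_norm_le_of_forall_hMean_le hp A hR
    refine ⟨B, ?_⟩
    filter_upwards [continuous_norm.tendsto c |>.eventually_lt_const hcR] with z hz i
    exact hB _ (hF i) (hA i) z hz.le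
  have hunif := tendstoLocallyUniformlyOn_of_differentiableOn_of_tendsto isOpen_ball hF hbdd hf
  have hfan : AnalyticOnDisc f := hunif.differentiableOn (.of_forall hF) isOpen_ball
  refine ⟨f, ⟨hfan, A, ?_⟩, hf⟩
  rintro _ ⟨r, hr, rfl⟩
  exact hMean_le_of_tendstoUniformlyOn hp.le hF hfan (Ioo_subset_Ico_self hr)
    ((tendstoLocallyUniformlyOn_iff_forall_isCompact isOpen_ball).1 hunif _
      (sphere_subset_ball hr.2) (isCompact_sphere _ _)) fun i => hA i r hr

end NormalFamily

section HardySpace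

variable {p r : ℝ} {f g : ℂ → ℂ}

theorem norm_add_rpow_le {E : Type*} [SeminormedAddCommGroup E] (hp : 0 ≤ p) (x y : E) :
    ‖x + y‖ ^ p ≤ 2 ^ p * (‖x‖ ^ p + ‖y‖ ^ p) := by
  wlog hxy : ‖y‖ ≤ ‖x‖ generalizing x y
  · rw [add_comm x, add_comm (‖x‖ ^ p)]
    exact this y x (le_of_not_ge hxy)
  calc ‖x + y‖ ^ p ≤ (2 * ‖x‖) ^ p := by gcongr; linarith [norm_add_le x y]
    _ = 2 ^ p * ‖x‖ ^ p := Real.mul_rpow two_pos.le (norm_nonneg x)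
    _ ≤ 2 ^ p * (‖x‖ ^ p + ‖y‖ ^ p) := by gcongr; exact le_add_of_nonneg_right (by positivity)

theorem hMean_add_le (hp : 0 ≤ p) (hf : AnalyticOnDisc f) (hg : AnalyticOnDisc g)
    (hr : r ∈ Ico (0 : ℝ) 1) :
    hMean p (fun z => f z + g z) r ≤ 2 ^ p * (hMean p f r + hMean p g r) := by
  have hfint := integrable_arcM_of_continuous (continuous_norm_rpow_comp_mul_bpt hf hp hr)
  have hgint := integrable_arcM_of_continuous (continuous_norm_rpow_comp_mul_bpt hg hp hr)
  simp only [hMean]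
  rw [← integral_add hfint hgint, ← integral_const_mul]
  exact integral_mono (integrable_arcM_of_continuous
    (continuous_norm_rpow_comp_mul_bpt (DifferentiableOn.fun_add hf hg) hp hr))
    ((hfint.add hgint).const_mul _) fun θ => norm_add_rpow_le hp _ _

theorem hMean_const_mul (p : ℝ) (c : ℂ) (f : ℂ → ℂ) (r : ℝ) :
    hMean p (fun z => c * f z) r = ‖c‖ ^ p * hMean p f r := by
  simp only [hMean, norm_mul, Real.mul_rpow (norm_nonneg _) (norm_nonneg _), integral_const_mul]

theorem MemHp.add (hf : MemHp p f) (hg : MemHp p g) (hp : 0 ≤ p) :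
    MemHp p fun z => f z + g z := by
  obtain ⟨A, hA⟩ := hf.2
  obtain ⟨B, hB⟩ := hg.2
  refine ⟨DifferentiableOn.fun_add hf.1 hg.1, 2 ^ p * (A + B), ?_⟩
  rintro _ ⟨r, hr, rfl⟩
  refine (hMean_add_le hp hf.1 hg.1 (Ioo_subset_Ico_self hr)).trans ?_
  gcongr
  exacts [hA ⟨r, hr, rfl⟩, hB ⟨r, hr, rfl⟩]

theorem MemHp.const_mul (hf : MemHp p f) (c : ℂ) : MemHp p fun z => c * f z := by
  obtain ⟨A, hA⟩ := hf.2
  refine ⟨DifferentiableOn.const_mul hf.1 c, ‖c‖ ^ p * A, ?_⟩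
  rintro _ ⟨r, hr, rfl⟩
  rw [hMean_const_mul]
  gcongr
  exact hA ⟨r, hr, rfl⟩

theorem MemHinf.memHp (hf : MemHinf f) (hp : 0 ≤ p) : MemHp p f := by
  obtain ⟨hfan, C, hC⟩ := hf
  refine ⟨hfan, ∫ _, C ^ p ∂arcM, ?_⟩
  rintro _ ⟨r, hr, rfl⟩
  have hr' := Ioo_subset_Ico_self hr
  refine integral_mono (integrable_arcM_of_continuous
    (continuous_norm_rpow_comp_mul_bpt hfan hp hr'))
    (integrable_arcM_of_continuous continuous_const) fun θ => ?_
  exact Real.rpow_le_rpow (norm_nonneg _)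
    (hC _ (mem_uDisc.2 (norm_ofReal_mul_bpt_lt_one hr' θ))) hp

theorem memHinf_polynomial_eval (q : ℂ[X]) : MemHinf fun z => q.eval z := by
  obtain ⟨C, hC⟩ := (isCompact_closedBall (0 : ℂ) 1).exists_bound_of_continuousOn
    q.continuous.continuousOn
  exact ⟨q.differentiable.differentiableOn, C, fun z hz => hC z (ball_subset_closedBall hz)⟩

theorem MemHp.hMean_le_of_hardyNorm_le (hf : MemHp p f) (hp : 0 < p) {K : ℝ}
    (hK : hardyNorm p f ≤ K) (hr : r ∈ Ioo (0 : ℝ) 1) :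
    hMean p f r ≤ K ^ (min 1 (1 / p))⁻¹ := by
  have hexp : 0 < min 1 (1 / p) := lt_min one_pos (by positivity)
  have hle : hMean p f r ≤ sSup (hMean p f '' Ioo 0 1) := le_csSup hf.2 ⟨r, hr, rfl⟩
  have hnonneg : 0 ≤ sSup (hMean p f '' Ioo 0 1) := (hMean_nonneg p f r).trans hle
  have hK0 : 0 ≤ K := (Real.rpow_nonneg hnonneg _).trans hK
  exact hle.trans ((Real.le_rpow_inv_iff_of_pos hnonneg hK0 hexp).2 hK)

end HardySpace

section CauchyDual

-- Where the series diverges its `tsum` is `0`; divergence at one point of the disc would make the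
-- sum vanish on an annulus, hence on the whole disc.
theorem summable_mul_pow_of_analyticOnDisc_tsum {a : ℕ → ℂ}
    (ha : AnalyticOnDisc fun z => ∑' n, a n * z ^ n) (ha0 : a 0 ≠ 0) {z : ℂ} (hz : ‖z‖ < 1) :
    Summable fun n => a n * z ^ n := by
  by_contra hdiv
  have hzero : ∀ w : ℂ, ‖z‖ ≤ ‖w‖ → ∑' n, a n * w ^ n = 0 := fun w hw => by
    refine tsum_eq_zero_of_not_summable fun hw_sum => hdiv ?_
    refine hw_sum.norm.of_norm_bounded fun n => ?_
    rw [norm_mul, norm_mul, norm_pow, norm_pow]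
    gcongr
  obtain ⟨ρ, hzρ, hρ1⟩ := exists_between hz
  have hρ : ‖(ρ : ℂ)‖ = ρ := Complex.norm_of_nonneg ((norm_nonneg z).trans hzρ.le)
  have heq := (DifferentiableOn.analyticOnNhd ha isOpen_ball)
    |>.eqOn_zero_of_preconnected_of_eventuallyEq_zero (convex_ball (0 : ℂ) 1).isPreconnected
      (z₀ := (ρ : ℂ)) (mem_uDisc.2 (hρ.trans_lt hρ1)) <| by
        filter_upwards [continuous_norm.continuousAt.eventually_const_lt (hzρ.trans_eq hρ.symm)]
          with w hw using hzero w hw.le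
  apply ha0
  have h0 := heq (mem_ball_self one_pos)
  simpa [tsum_eq_single 0 (fun n hn => by simp [hn] : ∀ n ≠ 0, a n * (0 : ℂ) ^ n = 0)] using h0

theorem exists_forall_norm_le_of_forall_norm_apply_le {𝕜 E ι : Type*} [RCLike 𝕜]
    [NormedAddCommGroup E] [NormedSpace 𝕜 E] {x : ι → E}
    (hx : ∀ Λ : StrongDual 𝕜 E, ∃ C, ∀ i, ‖Λ (x i)‖ ≤ C) : ∃ C, ∀ i, ‖x i‖ ≤ C := by
  obtain ⟨C, hC⟩ := banach_steinhaus (g := fun i => NormedSpace.inclusionInDoubleDual 𝕜 E (x i)) hx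
  exact ⟨C, fun i => ((NormedSpace.inclusionInDoubleDualLi 𝕜).norm_map (x i)).symm.trans_le (hC i)⟩

variable {X : Type*} [NormedAddCommGroup X] [NormedSpace ℂ X] {e : ℕ → X}

theorem summable_pow_smul_of_forall_summable [CompleteSpace X]
    (he : ∀ Λ : StrongDual ℂ X, ∀ z : ℂ, ‖z‖ < 1 → Summable fun n => conj (Λ (e n)) * z ^ n)
    {z : ℂ} (hz : ‖z‖ < 1) : Summable fun n => z ^ n • e n := by
  obtain ⟨ρ, hzρ, hρ1⟩ := exists_between hz
  have hρ0 : 0 < ρ := (norm_nonneg z).trans_lt hzρ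
  have hρ : ‖(ρ : ℂ)‖ = ρ := Complex.norm_of_nonneg hρ0.le
  obtain ⟨C, hC⟩ := exists_forall_norm_le_of_forall_norm_apply_le (𝕜 := ℂ)
    (x := fun n => (ρ : ℂ) ^ n • e n) fun Λ => by
      obtain ⟨C, hC⟩ := (he Λ ρ (hρ.trans_lt hρ1)).norm.tendsto_atTop_zero.bddAbove_range
      exact ⟨C, fun n => by simpa [mul_comm] using hC ⟨n, rfl⟩⟩
  refine ((summable_geometric_of_lt_one (by positivity) ((div_lt_one hρ0).2 hzρ)).mul_left C)
    |>.of_norm_bounded fun n => ?_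
  calc ‖z ^ n • e n‖ = ‖(ρ : ℂ) ^ n • e n‖ * (‖z‖ / ρ) ^ n := by
        rw [norm_smul, norm_smul, norm_pow, norm_pow, hρ, div_pow]
        field_simp
    _ ≤ C * (‖z‖ / ρ) ^ n := by gcongr; exact hC n

theorem summable_conj_apply_mul_pow (he0 : e 0 ≠ 0)
    (han : ∀ Λ : StrongDual ℂ X, AnalyticOnDisc (cauchyDualFn e Λ)) (Λ : StrongDual ℂ X) {z : ℂ}
    (hz : ‖z‖ < 1) : Summable fun n => conj (Λ (e n)) * z ^ n := by
  have hne : ∀ Λ : StrongDual ℂ X, Λ (e 0) ≠ 0 → Summable fun n => conj (Λ (e n)) * z ^ n :=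
    fun Λ hΛ => summable_mul_pow_of_analyticOnDisc_tsum (han Λ) (by simpa using hΛ) hz
  by_cases hΛ : Λ (e 0) = 0
  · obtain ⟨Λ₁, hΛ₁⟩ := SeparatingDual.exists_ne_zero (R := ℂ) he0
    refine ((hne (Λ + Λ₁) (by simpa [hΛ] using hΛ₁)).sub (hne Λ₁ hΛ₁)).congr fun n => ?_
    rw [add_apply, map_add]
    ring
  · exact hne Λ hΛ

/-- The Cauchy kernel `k_z = ∑ conj(z)ⁿ e_n`, the element of `X` for which the value at `z` of the
Cauchy dual function of `Λ` is `conj (Λ k_z)`. -/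
def cauchyKernel (e : ℕ → X) (z : ℂ) : X := ∑' n, conj z ^ n • e n

theorem cauchyDualFn_eq_conj_apply_cauchyKernel {z : ℂ} (hz : Summable fun n => conj z ^ n • e n)
    (Λ : StrongDual ℂ X) : cauchyDualFn e Λ z = conj (Λ (cauchyKernel e z)) := by
  rw [cauchyKernel, Λ.map_tsum hz, conj_tsum]
  simp [cauchyDualFn, mul_comm]

theorem eqOn_cauchyDualFn_conj_apply_cauchyKernel [CompleteSpace X] (he0 : e 0 ≠ 0)
    (han : ∀ Λ : StrongDual ℂ X, AnalyticOnDisc (cauchyDualFn e Λ)) (Λ : StrongDual ℂ X) :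
    EqOn (cauchyDualFn e Λ) (fun z => conj (Λ (cauchyKernel e z))) uDisc := fun z hz =>
  cauchyDualFn_eq_conj_apply_cauchyKernel (summable_pow_smul_of_forall_summable
    (fun Λ _ => summable_conj_apply_mul_pow he0 han Λ) (by simpa using mem_uDisc.1 hz)) Λ

end CauchyDual

section InnerMultiples

variable {X : Type*} [NormedAddCommGroup X] [NormedSpace ℂ X] {k : ℂ → X} {ϑ : ℂ → ℂ} {p : ℝ}

/-- The functionals `Λ` on `X` whose transform `z ↦ conj (Λ (k z))` lies in `ϑ H^p`. The transform
is conjugate-linear in `Λ`, so these form a complex subspace of the dual. -/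
def innerMultiples (k : ℂ → X) (ϑ : ℂ → ℂ) (hp : 0 < p) : Submodule ℂ (StrongDual ℂ X) where
  carrier := {Λ | ∃ h, MemHp p h ∧ EqOn (fun z => conj (Λ (k z))) (fun z => ϑ z * h z) uDisc}
  zero_mem' := ⟨fun z => (0 : ℂ[X]).eval z, (memHinf_polynomial_eval 0).memHp hp.le,
    fun z _ => by simp⟩
  add_mem' := by
    rintro Λ Λ' ⟨h, hh, heq⟩ ⟨h', hh', heq'⟩
    refine ⟨fun z => h z + h' z, hh.add hh' hp.le, fun z hz => ?_⟩
    simpa only [add_apply, map_add, mul_add] using congrArg₂ (· + ·) (heq hz) (heq' hz)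
  smul_mem' := by
    rintro c Λ ⟨h, hh, heq⟩
    refine ⟨fun z => conj c * h z, hh.const_mul _, fun z hz => ?_⟩
    simpa only [smul_apply, smul_eq_mul, map_mul, mul_left_comm] using
      congrArg (conj c * ·) (heq hz)

theorem mem_innerMultiples {hp : 0 < p} {Λ : StrongDual ℂ X} :
    Λ ∈ innerMultiples k ϑ hp ↔
      ∃ h, MemHp p h ∧ EqOn (fun z => conj (Λ (k z))) (fun z => ϑ z * h z) uDisc :=
  Iff.rfl

-- The quotients by `ϑ` of a bounded family of transforms are bounded in `H^p`, hence a normal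
-- family, and evaluation at each point of the disc is weak-star continuous.
theorem IsInner.isBoundedlyWeakStarClosed_innerMultiples (hϑ : IsInner ϑ) (hp : 0 < p)
    (hk : ∀ R : ℝ, ∃ A, ∀ Λ : StrongDual ℂ X, ‖Λ‖ ≤ R → ∀ r ∈ Ioo (0 : ℝ) 1,
      hMean p (fun z => conj (Λ (k z))) r ≤ A) :
    IsBoundedlyWeakStarClosed (innerMultiples k ϑ hp) := by
  intro R
  obtain ⟨A, hA⟩ := hk R
  set S : Set (WeakDual ℂ X) := WeakDual.toStrongDual ⁻¹'
    ((innerMultiples k ϑ hp : Set (StrongDual ℂ X)) ∩ closedBall 0 R)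
  refine isClosed_of_closure_subset fun Λ₀ hΛ₀ => ⟨?_, ?_⟩
  · have := mem_closure_iff_comap_neBot.1 hΛ₀
    let U : Ultrafilter S := .of (comap (↑) (𝓝 Λ₀))
    have hU : Tendsto (fun Λ : S => (Λ : WeakDual ℂ X)) U (𝓝 Λ₀) :=
      tendsto_comap.mono_left (Ultrafilter.of_le _)
    choose h hh heq using fun Λ : S => mem_innerMultiples.1 Λ.2.1
    have hhA : ∀ Λ : S, ∀ r ∈ Ioo (0 : ℝ) 1, hMean p (h Λ) r ≤ A := fun Λ =>
      hϑ.hMean_le_of_hMean_mul_le hp (hh Λ) hp fun r hr =>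
        (hMean_congr (heq Λ) (Ioo_subset_Ico_self hr)).symm.trans_le
          (hA _ (mem_closedBall_zero_iff.1 Λ.2.2) r hr)
    obtain ⟨h₀, hh₀, hlim⟩ := exists_memHp_tendsto_of_forall_hMean_le U hp (fun Λ => (hh Λ).1) hhA
    refine mem_innerMultiples.2 ⟨h₀, hh₀, fun z hz => ?_⟩
    have heval : Tendsto (fun Λ : S => conj ((Λ : WeakDual ℂ X) (k z))) U (𝓝 (conj (Λ₀ (k z)))) :=
      (continuous_conj.tendsto _).comp (((WeakDual.eval_continuous (k z)).tendsto Λ₀).comp hU)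
    exact tendsto_nhds_unique heval
      (((hlim z hz).const_mul (ϑ z)).congr fun Λ => (heq Λ hz).symm)
  · exact closure_minimal (fun Λ hΛ => hΛ.2) (WeakDual.isClosed_closedBall 0 R) hΛ₀

theorem wstarClosure_subset_of_isBoundedlyWeakStarClosed [CompleteSpace X]
    {M : Submodule ℂ (StrongDual ℂ X)} (hM : IsBoundedlyWeakStarClosed M)
    {S : Set (StrongDual ℂ X)} (hS : S ⊆ M) : wstarClosure S ⊆ M := by
  intro Λ hΛ
  by_contra hΛM
  obtain ⟨x, hx, hΛx⟩ := hM.exists_forall_apply_eq_zero_and_apply_ne_zero hΛM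
  obtain ⟨m, hm, hlt⟩ := hΛ {x} ‖Λ x‖ (norm_pos_iff.2 hΛx)
  have hlt_self := hlt x (Finset.mem_singleton_self x)
  rw [hx m (hS hm), sub_zero] at hlt_self
  exact hlt_self.false

end InnerMultiples

theorem dual_embeds_in_Hp_implies_Pproperty_general
    {X : Type*} [NormedAddCommGroup X] [NormedSpace ℂ X] [CompleteSpace X]
    {e : ℕ → X} (he0 : e 0 ≠ 0)
    (hdual : ∃ p : ℝ, 0 < p ∧ ∃ C : ℝ, 0 < C ∧ ∀ Λ : X →L[ℂ] ℂ,
      MemHp p (cauchyDualFn e Λ) ∧ hardyNorm p (cauchyDualFn e Λ) ≤ C * ‖Λ‖)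
    {ϑ : ℂ → ℂ} (hϑ : IsInner ϑ) : PProperty e ϑ := by
  intro Λ hΛ hΛ2
  obtain ⟨p, hp, C, hC, hHp⟩ := hdual
  have hker := eqOn_cauchyDualFn_conj_apply_cauchyKernel he0 fun Λ => (hHp Λ).1.1
  have hclosed := hϑ.isBoundedlyWeakStarClosed_innerMultiples (k := cauchyKernel e) hp fun R =>
    ⟨(C * R) ^ (min 1 (1 / p))⁻¹, fun Λ hΛR r hr => by
      rw [← hMean_congr (hker Λ) (Ioo_subset_Ico_self hr)]
      exact (hHp Λ).1.hMean_le_of_hardyNorm_le hp ((hHp Λ).2.trans (by gcongr)) hr⟩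
  have hpoly : polyMultiples e ϑ ⊆ innerMultiples (cauchyKernel e) ϑ hp := fun Λ ⟨q, hq⟩ =>
    mem_innerMultiples.2 ⟨_, (memHinf_polynomial_eval q).memHp hp.le, hq ▸ (hker Λ).symm⟩
  obtain ⟨h, hh, heq⟩ :=
    mem_innerMultiples.1 (wstarClosure_subset_of_isBoundedlyWeakStarClosed hclosed hpoly hΛ)
  have hfac : EqOn (cauchyDualFn e Λ) (fun z => ϑ z * h z) uDisc := (hker Λ).trans heq
  obtain ⟨A, hA⟩ := hΛ2.2
  have hh2 : ∀ r ∈ Ioo (0 : ℝ) 1, hMean 2 h r ≤ A :=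
    hϑ.hMean_le_of_hMean_mul_le hp hh two_pos fun r hr =>
      (hMean_congr hfac (Ioo_subset_Ico_self hr)).symm.trans_le (hA ⟨r, hr, rfl⟩)
  exact ⟨h, ⟨hh.1, A, forall_mem_image.2 hh2⟩, hfac⟩

/-- Theorem 1.4: for a Banach space `X` of analytic functions on 𝔻 in
which polynomials are dense, with `limsup ‖zⁿ‖^{1/n} ≤ 1`, continuously embedded in `H²`,
if the Cauchy dual `X'` embeds continuously in some `H^p`, `p > 0`, then `(X, ϑ)` has the
`(P)`-property for every inner function `ϑ`. -/
theorem dual_embeds_in_Hp_implies_Pproperty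
    {X : Type*} [NormedAddCommGroup X] [NormedSpace ℂ X] [CompleteSpace X]
    (T : X →ₗ[ℂ] (ℂ → ℂ)) (hinj : Function.Injective T)
    (han : ∀ x : X, AnalyticOnDisc (T x))
    (e : ℕ → X) (he : ∀ n : ℕ, T (e n) = fun z => z ^ n)
    (hpolydense : Dense {x : X | ∃ q : Polynomial ℂ, T x = fun z => q.eval z})
    (hmono : Filter.limsup (fun n : ℕ => ‖e n‖ ^ (1 / (n : ℝ))) Filter.atTop ≤ 1)
    (hH2 : ∀ x : X, MemHp 2 (T x))
    (hembed : ∃ C : ℝ, 0 < C ∧ ∀ x : X, hardyNorm 2 (T x) ≤ C * ‖x‖)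
    (hdual : ∃ p : ℝ, 0 < p ∧ ∃ C : ℝ, 0 < C ∧ ∀ Λ : X →L[ℂ] ℂ,
      MemHp p (cauchyDualFn e Λ) ∧ hardyNorm p (cauchyDualFn e Λ) ≤ C * ‖Λ‖) :
    ∀ ϑ : ℂ → ℂ, IsInner ϑ → PProperty e ϑ :=
  fun _ hϑ => dual_embeds_in_Hp_implies_Pproperty_general
    (fun h0 => by simpa [h0] using congrFun (he 0) 0) hdual hϑ
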